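/- arXiv:2404.15453 — 9 statements merged into one kernel-verified Lean document; each statement's English description precedes it below -/
import Mathlib

section
/- Let V be a real inner product space, L : V → V a linear map admitting an adjoint L*, and τ ∈ ℝ. Define R₂ = I + τL + (τ²/2)L² and the bilinear form B_L(w,v) = −⟨(L + L*)w, v⟩. Then for every w ∈ V, ‖R₂ w‖² = ‖w‖² + (τ⁴/4)‖L² w‖² − τ·B_L(w,w) − τ²·B_L(w, L w) − (τ³/2)·B_L(L w, L w). -/
open RealInnerProductSpace

/-- Energy identity of the two-stage second-order Runge--Kutta scheme
(Proposition 3.2): for `R₂ = I + τL + (τ²/2)L²` and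
`B_L(w,v) = -⟪(L + L*)w, v⟫`, one has
`‖R₂ w‖² = ‖w‖² + (τ⁴/4)‖L² w‖² - τ B_L(w,w) - τ² B_L(w, Lw) - (τ³/2) B_L(Lw, Lw)`. -/
theorem rk2_energy_identity {V : Type*} [NormedAddCommGroup V] [InnerProductSpace ℝ V]
    (L Lstar : V →ₗ[ℝ] V)
    (hadj : ∀ w v : V, ⟪L w, v⟫ = ⟪w, Lstar v⟫)
    (τ : ℝ) (w : V) :
    ‖w + τ • L w + (τ ^ 2 / 2) • L (L w)‖ ^ 2
      = ‖w‖ ^ 2 + (τ ^ 4 / 4) * ‖L (L w)‖ ^ 2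
        - τ * (-⟪(L + Lstar) w, w⟫)
        - τ ^ 2 * (-⟪(L + Lstar) w, L w⟫)
        - (τ ^ 3 / 2) * (-⟪(L + Lstar) (L w), L w⟫) := by
  have h : ∀ x y : V, ⟪Lstar x, y⟫ = ⟪L y, x⟫ := fun x y => by
    rw [hadj, real_inner_comm]
  simp only [← real_inner_self_eq_norm_sq, LinearMap.add_apply, inner_add_left,
    inner_add_right, real_inner_smul_left, real_inner_smul_right, h]
  rw [real_inner_comm (L w) w, real_inner_comm (L (L w)) w,
    real_inner_comm (L (L w)) (L w)]
  ring
end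

section
/- Let V be a real inner product space, L : V → V a linear map admitting an adjoint L*, τ ∈ ℝ, s ≥ 1, and α₀,…,α_s ∈ ℝ. Define R = Σ_{i=0}^s α_i (τL)^i and B_L(w,v) = −⟨(L + L*)w, v⟩. Then for every w ∈ V, ‖R w‖² = Σ_{i=0}^s β_i τ^{2i} ‖L^i w‖² + Σ_{i,j=0}^{s−1} γ_{ij} τ^{i+j+1} B_L(L^i w, L^j w), where β_i = Σ_{ℓ=max(0,2i−s)}^{min(2i,s)} (−1)^{i−ℓ} α_ℓ α_{2i−ℓ} and γ_{ij} = Σ_{ℓ=max(0,i+j+1−s)}^{min(i,j)} (−1)^{min(i,j)+1−ℓ} α_ℓ α_{i+j+1−ℓ}. -/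
open RealInnerProductSpace

/-- Truncated coefficient sequence. -/
def rkTrunc (s : ℕ) (α : ℕ → ℝ) (i : ℕ) : ℝ := if i ≤ s then α i else 0

/-- Alternating partial sums. -/
def rkT (a : ℕ → ℝ) (m n : ℕ) : ℝ := ∑ l ∈ Finset.range m, (-1 : ℝ) ^ l * (a l * a (n - l))

/-- The negatives of the coefficients `γ`. -/
def rkC (a : ℕ → ℝ) (i j : ℕ) : ℝ := (-1 : ℝ) ^ (min i j) * rkT a (min i j + 1) (i + j + 1)

lemma rkT_sym (a : ℕ → ℝ) (p : ℕ) :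
    rkT a (2 * p + 1) (2 * p) = 2 * rkT a p (2 * p) + (-1) ^ p * (a p * a p) := by
  unfold rkT
  rw [show 2 * p + 1 = p + (p + 1) by ring, Finset.sum_range_add, Finset.sum_range_succ',
    ← Finset.sum_range_reflect (fun k => (-1 : ℝ) ^ (p + (k + 1)) * _)]
  have h : ∀ j ∈ Finset.range p, (-1 : ℝ) ^ (p + (p - 1 - j + 1)) *
      (a (p + (p - 1 - j + 1)) * a (2 * p - (p + (p - 1 - j + 1))))
      = (-1 : ℝ) ^ j * (a j * a (2 * p - j)) := by
    intro j hj
    have hj := Finset.mem_range.1 hj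
    rw [show p + (p - 1 - j + 1) = 2 * p - j by omega, show 2 * p - (2 * p - j) = j by omega]
    have : (-1 : ℝ) ^ (2 * p - j) = (-1) ^ j := by
      apply neg_one_pow_congr
      rw [Nat.even_sub (by omega)]
      simp
    rw [this]; ring
  rw [Finset.sum_congr rfl h, show p + 0 = p by rfl, show 2 * p - p = p by omega]
  ring

lemma rk_sq (p : ℕ) : ((-1 : ℝ) ^ p) * (-1) ^ p = 1 := by
  rw [← mul_pow]; simp

lemma rk_lt (a : ℕ → ℝ) (p q : ℕ) (h : p < q) :
    a p * a q = (if p = 0 then 0 else rkC a (p - 1) q) + rkC a p (q - 1) := by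
  have h1 : rkC a p (q - 1) = (-1) ^ p * rkT a p (p + q) + a p * a q := by
    unfold rkC
    rw [min_eq_left (by omega), show p + (q - 1) + 1 = p + q by omega]
    unfold rkT
    rw [Finset.sum_range_succ, show p + q - p = q by omega]
    linear_combination (a p * a q) * rk_sq p
  rw [h1]
  rcases p with _ | p
  · simp [rkT]
  · simp only [Nat.add_eq_zero_iff, one_ne_zero, and_false, if_false, Nat.add_sub_cancel]
    unfold rkC
    rw [min_eq_left (by omega), show p + q + 1 = p + 1 + q by omega]
    ring

lemma rkC_comm (a : ℕ → ℝ) (p q : ℕ) : rkC a p q = rkC a q p := by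
  unfold rkC; rw [min_comm, add_comm p q]

lemma rk_point (a : ℕ → ℝ) (p q : ℕ) :
    a p * a q = (if p = q then (-1) ^ p * rkT a (2 * p + 1) (2 * p) else 0)
      + (if p = 0 then 0 else rkC a (p - 1) q) + (if q = 0 then 0 else rkC a p (q - 1)) := by
  rcases lt_trichotomy p q with h | h | h
  · rw [rk_lt a p q h, if_neg h.ne, if_neg (show q ≠ 0 by omega)]; ring
  · subst h
    rw [rkT_sym, if_pos rfl, rkC_comm a p (p - 1)]
    rcases p with _ | p
    · simp [rkT]
    · simp only [Nat.add_eq_zero_iff, one_ne_zero, and_false, if_false, Nat.add_sub_cancel]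
      unfold rkC
      rw [min_eq_left (by omega), show p + (p + 1) + 1 = 2 * (p + 1) by omega]
      linear_combination (-a (p + 1) * a (p + 1)) * rk_sq (p + 1)
  · rw [mul_comm, rk_lt a q p h, if_neg h.ne', if_neg (show p ≠ 0 by omega), rkC_comm a q,
      rkC_comm a p]; ring

lemma rkC_zero (s : ℕ) (α : ℕ → ℝ) (i j : ℕ) (h : s ≤ i ∨ s ≤ j) :
    rkC (rkTrunc s α) i j = 0 := by
  unfold rkC rkT
  rw [Finset.sum_eq_zero, mul_zero]
  intro l hl
  have := Finset.mem_range.1 hl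
  have h2 : ¬ (i + j + 1 - l ≤ s) := by omega
  simp [rkTrunc, h2]

lemma rk_scalar (s : ℕ) (α : ℕ → ℝ) (G : ℕ → ℕ → ℝ) :
    ∑ p ∈ Finset.range (s + 1), ∑ q ∈ Finset.range (s + 1), α p * α q * G p q
    = (∑ p ∈ Finset.range (s + 1),
        ((-1) ^ p * rkT (rkTrunc s α) (2 * p + 1) (2 * p)) * G p p)
      + ∑ i ∈ Finset.range s, ∑ j ∈ Finset.range s,
          rkC (rkTrunc s α) i j * (G (i + 1) j + G i (j + 1)) := by
  have h : ∀ p ∈ Finset.range (s + 1), ∀ q ∈ Finset.range (s + 1), α p * α q * G p q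
      = (if p = q then ((-1) ^ p * rkT (rkTrunc s α) (2 * p + 1) (2 * p)) * G p q else 0)
      + (if p = 0 then 0 else rkC (rkTrunc s α) (p - 1) q * G p q)
      + (if q = 0 then 0 else rkC (rkTrunc s α) p (q - 1) * G p q) := by
    intro p hp q hq
    have hp := Finset.mem_range.1 hp
    have hq := Finset.mem_range.1 hq
    have := rk_point (rkTrunc s α) p q
    have e1 : rkTrunc s α p = α p := if_pos (by omega)
    have e2 : rkTrunc s α q = α q := if_pos (by omega)
    rw [← e1, ← e2, this]
    split_ifs <;> ring
  rw [Finset.sum_congr rfl (fun p hp => Finset.sum_congr rfl (h p hp))]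
  simp only [Finset.sum_add_distrib, mul_add]
  rw [add_assoc]
  congr 1
  · apply Finset.sum_congr rfl
    intro p hp
    rw [Finset.sum_ite_eq, if_pos hp]
  congr 1
  · rw [Finset.sum_range_succ']
    simp only [Nat.add_eq_zero_iff, one_ne_zero, and_false, if_false, Nat.add_sub_cancel, if_true,
      Finset.sum_const_zero, add_zero]
    apply Finset.sum_congr rfl
    intro p hp
    rw [Finset.sum_range_succ, rkC_zero s α p s (Or.inr le_rfl)]
    ring
  · rw [Finset.sum_range_succ]
    simp only [Finset.sum_range_succ' _ s, Nat.add_eq_zero_iff, one_ne_zero, and_false, if_false,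
      Nat.add_sub_cancel, if_true, add_zero]
    simp [rkC_zero s α s _ (Or.inl le_rfl)]

lemma rk_beta (s : ℕ) (α : ℕ → ℝ) (i : ℕ) :
    ∑ ℓ ∈ Finset.Icc (2 * i - s) (min (2 * i) s),
      (-1 : ℝ) ^ ((i : ℤ) - (ℓ : ℤ)) * (α ℓ * α (2 * i - ℓ))
    = (-1) ^ i * rkT (rkTrunc s α) (2 * i + 1) (2 * i) := by
  unfold rkT
  rw [Finset.mul_sum]
  trans ∑ ℓ ∈ Finset.Icc (2 * i - s) (min (2 * i) s),
    (-1) ^ i * ((-1) ^ ℓ * (rkTrunc s α ℓ * rkTrunc s α (2 * i - ℓ)))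
  · apply Finset.sum_congr rfl
    intro l hl
    have hl := Finset.mem_Icc.1 hl
    have e1 : rkTrunc s α l = α l := if_pos (by omega)
    have e2 : rkTrunc s α (2 * i - l) = α (2 * i - l) := if_pos (by omega)
    rw [e1, e2, zpow_sub₀ (by norm_num), zpow_natCast, zpow_natCast, div_eq_mul_inv,
      inv_eq_of_mul_eq_one_left (rk_sq l)]
    ring
  · apply Finset.sum_subset
    · intro l hl
      have hl := Finset.mem_Icc.1 hl
      exact Finset.mem_range.2 (by omega)
    · intro l hl hl'
      have hl := Finset.mem_range.1 hl
      rw [Finset.mem_Icc] at hl'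
      have : ¬ (l ≤ s) ∨ ¬ (2 * i - l ≤ s) := by omega
      rcases this with h | h <;> simp [rkTrunc, h]

lemma rk_gamma (s : ℕ) (α : ℕ → ℝ) (i j : ℕ) (hi : i < s) (hj : j < s) :
    ∑ ℓ ∈ Finset.Icc (i + j + 1 - s) (min i j),
      (-1 : ℝ) ^ (min i j + 1 - ℓ) * (α ℓ * α (i + j + 1 - ℓ))
    = - rkC (rkTrunc s α) i j := by
  unfold rkC rkT
  rw [Finset.mul_sum, ← Finset.sum_neg_distrib]
  trans ∑ ℓ ∈ Finset.Icc (i + j + 1 - s) (min i j),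
    -((-1) ^ (min i j) * ((-1) ^ ℓ * (rkTrunc s α ℓ * rkTrunc s α (i + j + 1 - ℓ))))
  · apply Finset.sum_congr rfl
    intro l hl
    have hl := Finset.mem_Icc.1 hl
    have e1 : rkTrunc s α l = α l := if_pos (by omega)
    have e2 : rkTrunc s α (i + j + 1 - l) = α (i + j + 1 - l) := if_pos (by omega)
    rw [e1, e2]
    obtain ⟨k, hk⟩ := Nat.exists_eq_add_of_le hl.2
    rw [hk, show l + k + 1 - l = k + 1 by omega, pow_succ, pow_add]
    linear_combination ((-1) ^ k * (α l * α (i + j + 1 - l))) * rk_sq l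
  · apply Finset.sum_subset
    · intro l hl
      have hl := Finset.mem_Icc.1 hl
      exact Finset.mem_range.2 (by omega)
    · intro l hl hl'
      have hl := Finset.mem_range.1 hl
      rw [Finset.mem_Icc] at hl'
      have h : ¬ (i + j + 1 - l ≤ s) := by omega
      simp [rkTrunc, h]

/-- General energy identity of an `s`-stage Runge--Kutta scheme with stability
polynomial coefficients `α i` (Lemma 3.6): for `R = ∑_{i=0}^s α_i (τL)^i` and
`B_L(w,v) = -⟪(L + L*)w, v⟫`,
`‖R w‖² = ∑_{i=0}^s β_i τ^{2i} ‖L^i w‖² + ∑_{i,j=0}^{s-1} γ_{ij} τ^{i+j+1} B_L(L^i w, L^j w)`,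
where `β_i = ∑_{ℓ=max(0,2i-s)}^{min(2i,s)} (-1)^{i-ℓ} α_ℓ α_{2i-ℓ}` and
`γ_{ij} = ∑_{ℓ=max(0,i+j+1-s)}^{min(i,j)} (-1)^{min(i,j)+1-ℓ} α_ℓ α_{i+j+1-ℓ}`. -/
theorem rk_energy_identity {V : Type*} [NormedAddCommGroup V] [InnerProductSpace ℝ V]
    (L Lstar : V →ₗ[ℝ] V)
    (hadj : ∀ w v : V, ⟪L w, v⟫ = ⟪w, Lstar v⟫)
    (τ : ℝ) (s : ℕ) (hs : 1 ≤ s) (α : ℕ → ℝ) (w : V) :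
    ‖(∑ i ∈ Finset.range (s + 1), α i • ((τ • L) ^ i)) w‖ ^ 2
      = (∑ i ∈ Finset.range (s + 1),
          (∑ ℓ ∈ Finset.Icc (2 * i - s) (min (2 * i) s),
              (-1 : ℝ) ^ ((i : ℤ) - (ℓ : ℤ)) * (α ℓ * α (2 * i - ℓ)))
            * τ ^ (2 * i) * ‖(L ^ i) w‖ ^ 2)
        + ∑ i ∈ Finset.range s, ∑ j ∈ Finset.range s,
            (∑ ℓ ∈ Finset.Icc (i + j + 1 - s) (min i j),
                (-1 : ℝ) ^ (min i j + 1 - ℓ) * (α ℓ * α (i + j + 1 - ℓ)))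
              * τ ^ (i + j + 1)
              * (-⟪(L + Lstar) ((L ^ i) w), (L ^ j) w⟫) := by
  have hR : (∑ i ∈ Finset.range (s + 1), α i • ((τ • L) ^ i)) w
      = ∑ i ∈ Finset.range (s + 1), α i • (τ ^ i • (L ^ i) w) := by
    simp [LinearMap.sum_apply, smul_pow]
  have hsc := rk_scalar s α (fun p q => τ ^ (p + q) * ⟪(L ^ p) w, (L ^ q) w⟫)
  rw [hR, ← real_inner_self_eq_norm_sq, sum_inner]
  simp only [inner_sum, real_inner_smul_left, real_inner_smul_right]
  trans ∑ p ∈ Finset.range (s + 1), ∑ q ∈ Finset.range (s + 1),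
      α p * α q * (τ ^ (p + q) * ⟪(L ^ p) w, (L ^ q) w⟫)
  · refine Finset.sum_congr rfl fun p _ => Finset.sum_congr rfl fun q _ => ?_
    rw [pow_add]; ring
  rw [hsc]
  congr 1
  · refine Finset.sum_congr rfl fun p _ => ?_
    rw [rk_beta, real_inner_self_eq_norm_sq, two_mul p]
    ring
  · refine Finset.sum_congr rfl fun i hi => Finset.sum_congr rfl fun j hj => ?_
    rw [rk_gamma s α i j (Finset.mem_range.1 hi) (Finset.mem_range.1 hj), LinearMap.add_apply,
      inner_add_left, real_inner_comm _ (Lstar _), ← hadj, pow_succ' L i, pow_succ' L j,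
      Module.End.mul_apply, Module.End.mul_apply, real_inner_comm (L ((L ^ j) w)),
      show i + 1 + j = i + j + 1 by ring, show i + (j + 1) = i + j + 1 by ring]
    ring
end

section
/- Let V be a real inner product space, L : V → V a linear map admitting an adjoint L*, and define B_L(w,v) = −⟨(L + L*)w, v⟩. Then for every integer i ≥ 1 and all w, v ∈ V, ⟨L^i w, v⟩ = Σ_{j=0}^{i−1} (−1)^{j+1} B_L(L^{i−j−1} w, L^{j} v) + (−1)^i ⟨w, L^i v⟩. -/
open RealInnerProductSpace

/-- Discrete integration by parts (Lemma 7.1): with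
`B_L(w,v) = -⟪(L + L*)w, v⟫`, for every `i ≥ 1`,
`⟪L^i w, v⟫ = ∑_{j=0}^{i-1} (-1)^{j+1} B_L(L^{i-j-1} w, L^j v) + (-1)^i ⟪w, L^i v⟫`. -/
theorem discrete_integration_by_parts {V : Type*} [NormedAddCommGroup V]
    [InnerProductSpace ℝ V] (L Lstar : V →ₗ[ℝ] V)
    (hadj : ∀ w v : V, ⟪L w, v⟫ = ⟪w, Lstar v⟫)
    (i : ℕ) (hi : 1 ≤ i) (w v : V) :
    ⟪(L ^ i) w, v⟫
      = (∑ j ∈ Finset.range i,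
          (-1 : ℝ) ^ (j + 1) * (-⟪(L + Lstar) ((L ^ (i - j - 1)) w), (L ^ j) v⟫))
        + (-1 : ℝ) ^ i * ⟪w, (L ^ i) v⟫ := by
  clear hi
  have hadj' : ∀ w v : V, ⟪Lstar w, v⟫ = ⟪w, L v⟫ := fun w v => by
    rw [real_inner_comm, ← hadj, real_inner_comm]
  induction i generalizing v with
  | zero => simp
  | succ n ih =>
    have h := ih (L v)
    rw [Finset.sum_range_succ']
    have e : ∀ j ∈ Finset.range n,
        (-1 : ℝ) ^ (j + 1 + 1) *
          (-⟪(L + Lstar) ((L ^ (n + 1 - (j + 1) - 1)) w), (L ^ (j + 1)) v⟫)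
        = - ((-1 : ℝ) ^ (j + 1) *
          (-⟪(L + Lstar) ((L ^ (n - j - 1)) w), (L ^ j) (L v)⟫)) := by
      intro j _
      rw [Nat.add_sub_add_right, pow_succ L j, Module.End.mul_apply]
      ring
    rw [Finset.sum_congr rfl e, Finset.sum_neg_distrib, pow_succ' L n,
      Module.End.mul_apply]
    have e2 : (L * L ^ n) v = (L ^ n) (L v) := by
      rw [← pow_succ', pow_succ, Module.End.mul_apply]
    rw [e2]
    have e3 : n + 1 - 0 - 1 = n := by omega
    rw [e3, LinearMap.add_apply, inner_add_left, pow_zero L, Module.End.one_apply, hadj']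
    rw [pow_succ (-1 : ℝ) n]
    generalize (∑ j ∈ Finset.range n, (-1 : ℝ) ^ (j + 1) *
          (-⟪(L + Lstar) ((L ^ (n - j - 1)) w), (L ^ j) (L v)⟫)) = S at h ⊢
    rw [h]
    ring
end

section
/- For every constant c₄ > 0 there exist ε > 0 and λ₀ > 0 (depending only on c₄) with the following property. Let V be a finite-dimensional real inner product space, L : V → V a semi-negative linear map, h > 0, τ > 0, and λ = τ/h ≤ λ₀. Assume that for all w ∈ V one has τ⁴‖L² w‖² ≤ c₄ (τ λ³ |w|_Γ² + τ³ λ |L w|_Γ²). Then for R₂ = I + τL + (τ²/2)L², every w ∈ V satisfies ‖R₂ w‖² ≤ ‖w‖² − ε (τ |w|_Γ² + τ³ |L w|_Γ²). -/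
open RealInnerProductSpace

/-- The jump seminorm `|v|_Γ = (-⟪(L + L*)v, v⟫)^{1/2}` associated with a
semi-negative operator `L` with adjoint `L*`. -/
noncomputable def jumpSN {V : Type*} [NormedAddCommGroup V] [InnerProductSpace ℝ V]
    (L Lstar : V →ₗ[ℝ] V) (v : V) : ℝ :=
  Real.sqrt (-⟪(L + Lstar) v, v⟫)

/-- Monotonicity stability of RK2DG1 (Proposition 3.4): under the bound
`τ⁴‖L²w‖² ≤ c₄(τλ³|w|_Γ² + τ³λ|Lw|_Γ²)` for a semi-negative `L` and `λ = τ/h ≤ λ₀`,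
the operator `R₂ = I + τL + (τ²/2)L²` satisfies
`‖R₂ w‖² ≤ ‖w‖² - ε(τ|w|_Γ² + τ³|Lw|_Γ²)`. -/
theorem rk2dg1_monotonicity_stability :
    ∀ c₄ : ℝ, 0 < c₄ → ∃ ε > (0 : ℝ), ∃ lam₀ > (0 : ℝ),
      ∀ (V : Type) [NormedAddCommGroup V] [InnerProductSpace ℝ V] [FiniteDimensional ℝ V],
      ∀ L Lstar : V →ₗ[ℝ] V,
        (∀ w v : V, ⟪L w, v⟫ = ⟪w, Lstar v⟫) →
        (∀ v : V, ⟪(L + Lstar) v, v⟫ ≤ 0) →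
        ∀ h τ : ℝ, 0 < h → 0 < τ → τ / h ≤ lam₀ →
        (∀ w : V, τ ^ 4 * ‖L (L w)‖ ^ 2
            ≤ c₄ * (τ * (τ / h) ^ 3 * (jumpSN L Lstar w) ^ 2
              + τ ^ 3 * (τ / h) * (jumpSN L Lstar (L w)) ^ 2)) →
        ∀ w : V,
          ‖w + τ • L w + (τ ^ 2 / 2) • L (L w)‖ ^ 2
            ≤ ‖w‖ ^ 2
              - ε * (τ * (jumpSN L Lstar w) ^ 2 + τ ^ 3 * (jumpSN L Lstar (L w)) ^ 2) := by
  intro c hc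
  refine ⟨1 / 16, by norm_num, 1 / (4 * (c + 1)), by positivity, ?_⟩
  intro V _ _ _ L Lstar hadj hneg h τ hh hτ hlam hbound w
  have hform : ∀ v : V, ⟪(L + Lstar) v, v⟫ = 2 * ⟪L v, v⟫ := by
    intro v
    rw [LinearMap.add_apply, inner_add_left, real_inner_comm v (Lstar v), ← hadj v v]
    ring
  have hL : ∀ v : V, ⟪L v, v⟫ ≤ 0 := by
    intro v
    have := hneg v
    rw [hform] at this
    linarith
  have hj : ∀ v : V, (jumpSN L Lstar v) ^ 2 = -2 * ⟪L v, v⟫ := by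
    intro v
    unfold jumpSN
    rw [Real.sq_sqrt (by linarith [hneg v]), hform]
    ring
  have hb := hbound w
  rw [hj, hj] at hb ⊢
  have hP := hL w
  have hQ := hL (L w)
  have hv := hL (w + (2 * τ / 3) • L w)
  have hexp : ‖w + τ • L w + (τ ^ 2 / 2) • L (L w)‖ ^ 2 = ‖w‖ ^ 2 + τ ^ 2 * ⟪L w, L w⟫
      + τ ^ 4 / 4 * ‖L (L w)‖ ^ 2 + 2 * τ * ⟪L w, w⟫ + τ ^ 2 * ⟪L (L w), w⟫
      + τ ^ 3 * ⟪L (L w), L w⟫ := by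
    simp only [← real_inner_self_eq_norm_sq, inner_add_left, inner_add_right,
      real_inner_smul_left, real_inner_smul_right]
    rw [real_inner_comm (L w) w, real_inner_comm (L (L w)) w, real_inner_comm (L (L w)) (L w)]
    ring
  simp only [map_add, map_smul, inner_add_left, inner_add_right,
      real_inner_smul_left, real_inner_smul_right] at hv
  rw [hexp]
  have hl0 : 0 < τ / h := by positivity
  generalize τ / h = l at *
  generalize ⟪L w, w⟫ = P at *
  generalize ⟪L (L w), L w⟫ = Q at *
  generalize ⟪L (L w), w⟫ = M at *
  generalize ⟪L w, L w⟫ = N at *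
  generalize ‖L (L w)‖ ^ 2 = K at *
  rw [le_div_iff₀ (by positivity)] at hlam
  have hcl0 : 0 < c * l := by positivity
  have hcl : c * l ≤ 1 / 4 := by linarith
  have hl1 : l ≤ 1 := by linarith
  have hcl3 : c * l ^ 3 ≤ 1 / 4 := by
    have : l ^ 2 ≤ 1 := pow_le_one₀ hl0.le hl1
    nlinarith
  have hx : 0 ≤ τ * -P := mul_nonneg hτ.le (by linarith)
  have hy : 0 ≤ τ ^ 3 * -Q := mul_nonneg (by positivity) (by linarith)
  have e1 := mul_le_mul_of_nonneg_right hcl3 hx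
  have e2 := mul_le_mul_of_nonneg_right hcl hy
  have e3 := mul_le_mul_of_nonneg_left hv hτ.le
  nlinarith [e1, e2, e3, hb, hx, hy]
end

section
/- For all constants c₁, c₂, c₃, c₄ > 0 there exists λ₀ > 0 (depending only on c₁, c₂, c₃, c₄) with the following property. Let V be a finite-dimensional real inner product space, L : V → V a semi-negative linear map, P : V → V an orthogonal projection (self-adjoint and idempotent), h > 0, τ > 0, and λ = τ/h ≤ λ₀. Assume for all w, v ∈ V: (H2) ‖P L w‖ ≤ c₁ h^{−1/2} |w|_Γ and ‖P L* w‖ ≤ c₁ h^{−1/2} |w|_Γ; (H3) |v|_Γ ≤ c₂ h^{−1/2} ‖v‖; (H4) ‖L v‖ ≤ c₃ h^{−1} ‖v‖; and (H5) τ⁴‖L² w‖² ≤ c₄ (τ λ³ |w|_Γ² + τ³ λ |L w|_Γ²). Then the operator R̃₂ = I + τL + (τ²/2) L (I − P) L satisfies ‖R̃₂ w‖ ≤ ‖w‖ for all w ∈ V. -/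
open RealInnerProductSpace

lemma my_le_of_sq_le_sq {a b : ℝ} (h : a ^ 2 ≤ b ^ 2) (hb : 0 ≤ b) : a ≤ b :=
  (le_abs_self a).trans (abs_le_of_sq_le_sq h hb)

lemma final_ineq (c₁ c₃ c₄ m x Y : ℝ) (h4 : 0 < c₄) (hm : 0 < m)
    (hlam : m ≤ 1 / (8 * (2 * c₁ ^ 2 + c₄ + c₁ ^ 2 * c₃ ^ 2 + 1))) :
    -x ^ 2 - Y ^ 2 / 2 + (9 * x ^ 2 + 4 * Y ^ 2) / 12 + m * c₁ ^ 2 * x ^ 2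
      + m * c₁ ^ 2 * (x * Y) + c₄ / 2 * (m ^ 3 * x ^ 2 + m * Y ^ 2)
      + m ^ 3 * c₃ ^ 2 * c₁ ^ 2 * x ^ 2 / 2 ≤ 0 := by
  have hK : 0 ≤ 2 * c₁ ^ 2 + c₄ + c₁ ^ 2 * c₃ ^ 2 := by positivity
  have hl : m * (8 * (2 * c₁ ^ 2 + c₄ + c₁ ^ 2 * c₃ ^ 2 + 1)) ≤ 1 :=
    (le_div_iff₀ (by positivity)).1 hlam
  have hm1 : m ≤ 1 := by nlinarith [mul_nonneg hm.le hK]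
  have hm3 : m ^ 3 ≤ m := pow_le_of_le_one hm.le hm1 (by norm_num)
  have a1 : m * c₁ ^ 2 * (x * Y) ≤ m * c₁ ^ 2 * ((x ^ 2 + Y ^ 2) / 2) :=
    mul_le_mul_of_nonneg_left (by nlinarith [sq_nonneg (x - Y)]) (by positivity)
  have a2 := mul_le_mul_of_nonneg_right hm3 (by positivity : 0 ≤ c₄ / 2 * x ^ 2)
  have a3 := mul_le_mul_of_nonneg_right hm3 (by positivity : 0 ≤ c₃ ^ 2 * c₁ ^ 2 * x ^ 2 / 2)
  have a4 := mul_le_mul_of_nonneg_right hl (by positivity : 0 ≤ (x ^ 2 + Y ^ 2) / 8)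
  have p1 : 0 ≤ m * c₁ ^ 2 * x ^ 2 := by positivity
  have p2 : 0 ≤ m * c₁ ^ 2 * Y ^ 2 := by positivity
  have p3 : 0 ≤ m * c₄ * x ^ 2 := by positivity
  have p4 : 0 ≤ m * c₄ * Y ^ 2 := by positivity
  have p5 : 0 ≤ m * (c₁ ^ 2 * c₃ ^ 2) * x ^ 2 := by positivity
  have p6 : 0 ≤ m * (c₁ ^ 2 * c₃ ^ 2) * Y ^ 2 := by positivity
  have p7 : 0 ≤ m * x ^ 2 := by positivity
  have p8 : 0 ≤ m * Y ^ 2 := by positivity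
  have p9 := sq_nonneg x
  have p10 := sq_nonneg Y
  linarith

/-- Monotonicity stability of the sdA-RK2DG1 scheme (Theorem 3.1): under
hypotheses (H2)-(H5), for `λ = τ/h ≤ λ₀` the operator
`R̃₂ = I + τL + (τ²/2)L(I - P)L` satisfies `‖R̃₂ w‖ ≤ ‖w‖`. -/
theorem sdA_rk2dg1_monotonicity_stability :
    ∀ c₁ c₂ c₃ c₄ : ℝ, 0 < c₁ → 0 < c₂ → 0 < c₃ → 0 < c₄ →
    ∃ lam₀ > (0 : ℝ),
      ∀ (V : Type) [NormedAddCommGroup V] [InnerProductSpace ℝ V] [FiniteDimensional ℝ V],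
      ∀ L Lstar P : V →ₗ[ℝ] V,
        (∀ w v : V, ⟪L w, v⟫ = ⟪w, Lstar v⟫) →
        (∀ v : V, ⟪(L + Lstar) v, v⟫ ≤ 0) →
        (∀ w v : V, ⟪P w, v⟫ = ⟪w, P v⟫) →
        (∀ v : V, P (P v) = P v) →
        ∀ h τ : ℝ, 0 < h → 0 < τ → τ / h ≤ lam₀ →
        (∀ w : V, ‖P (L w)‖ ≤ c₁ * h ^ (-(1 / 2) : ℝ) * jumpSN L Lstar w) →
        (∀ w : V, ‖P (Lstar w)‖ ≤ c₁ * h ^ (-(1 / 2) : ℝ) * jumpSN L Lstar w) →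
        (∀ v : V, jumpSN L Lstar v ≤ c₂ * h ^ (-(1 / 2) : ℝ) * ‖v‖) →
        (∀ v : V, ‖L v‖ ≤ c₃ * h⁻¹ * ‖v‖) →
        (∀ w : V, τ ^ 4 * ‖L (L w)‖ ^ 2
            ≤ c₄ * (τ * (τ / h) ^ 3 * (jumpSN L Lstar w) ^ 2
              + τ ^ 3 * (τ / h) * (jumpSN L Lstar (L w)) ^ 2)) →
        ∀ w : V, ‖w + τ • L w + (τ ^ 2 / 2) • L (L w - P (L w))‖ ≤ ‖w‖ := by
  intro c₁ c₂ c₃ c₄ h1 h2 h3 h4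
  refine ⟨1 / (8 * (2 * c₁ ^ 2 + c₄ + c₁ ^ 2 * c₃ ^ 2 + 1)), by positivity, ?_⟩
  intro V _ _ _ L Ls P hadj hneg hPs hPi h τ hh hτ hlam H2 H2s _ H4 H5 w
  have hsq : ∀ v, jumpSN L Ls v ^ 2 = -⟪(L + Ls) v, v⟫ := fun v =>
    Real.sq_sqrt (by linarith [hneg v])
  have hnn : ∀ v, 0 ≤ jumpSN L Ls v := fun v => Real.sqrt_nonneg _
  have hs : (h ^ (-(1 / 2) : ℝ)) ^ 2 = h⁻¹ := by
    rw [← Real.rpow_natCast, ← Real.rpow_mul hh.le, ← Real.rpow_neg_one]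
    norm_num
  have hs0 : 0 < h ^ (-(1 / 2) : ℝ) := Real.rpow_pos_of_pos hh _
  generalize h ^ (-(1 / 2) : ℝ) = s at *
  have hdiv : τ / h = τ * s ^ 2 := by rw [hs]; rfl
  rw [← hs] at H4
  rw [hdiv] at hlam H5
  have hl0 : 0 < τ * s ^ 2 := by positivity
  have H2w := H2 w
  have H2sw := H2s w
  have H2sa := H2s (L w)
  have H5w := H5 w
  have H4p := H4 (P (L w))
  have hx := hsq w
  have hy := hsq (L w)
  have hx0 := hnn w
  have hy0 := hnn (L w)
  have hv := hneg ((3 : ℝ) • w + (2 * τ) • L w)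
  generalize hxe : jumpSN L Ls w = x at *
  generalize hye : jumpSN L Ls (L w) = y at *
  clear H2 H2s H5 H4 hsq hnn hneg
  generalize hae : L w = a at *
  generalize hpe : P a = p at *
  have hPp : P p = p := by rw [← hpe, hPi]
  -- inner product facts
  have e1 : ⟪L w, w⟫ = ⟪w, Ls w⟫ := hadj w w
  have e2 : ⟪L a, a⟫ = ⟪a, Ls a⟫ := hadj a a
  have e3 : ⟪L a, w⟫ = ⟪a, Ls w⟫ := hadj a w
  have e4 : ⟪L p, w⟫ = ⟪p, Ls w⟫ := hadj p w
  have e5 : ⟪L p, a⟫ = ⟪p, Ls a⟫ := hadj p a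
  have e6 : ⟪p, Ls w⟫ = ⟪p, P (Ls w)⟫ := by rw [← hPs, hPp]
  have e7 : ⟪p, Ls a⟫ = ⟪p, P (Ls a)⟫ := by rw [← hPs, hPp]
  have e8 : ⟪L w, a⟫ = ⟪w, Ls a⟫ := hadj w a
  rw [hae] at e1 e8
  have b6 : -⟪p, P (Ls w)⟫ ≤ (c₁ * s * x) * (c₁ * s * x) := by
    have := neg_le_of_abs_le (abs_real_inner_le_norm p (P (Ls w)))
    have := mul_le_mul H2w H2sw (norm_nonneg _) (by positivity)
    linarith
  have b7 : -⟪p, P (Ls a)⟫ ≤ (c₁ * s * x) * (c₁ * s * y) := by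
    have := neg_le_of_abs_le (abs_real_inner_le_norm p (P (Ls a)))
    have := mul_le_mul H2w H2sa (norm_nonneg _) (by positivity)
    linarith
  have bp : ‖L p‖ ^ 2 ≤ (c₃ * s ^ 2 * (c₁ * s * x)) ^ 2 := by
    have : ‖L p‖ ≤ c₃ * s ^ 2 * (c₁ * s * x) :=
      H4p.trans (mul_le_mul_of_nonneg_left H2w (by positivity))
    exact pow_le_pow_left₀ (norm_nonneg _) this 2
  have bq : ‖L a - L p‖ ^ 2 ≤ 2 * ‖L a‖ ^ 2 + 2 * ‖L p‖ ^ 2 := by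
    have := parallelogram_law_with_norm ℝ (L a) (L p)
    nlinarith [sq_nonneg ‖L a + L p‖]
  have hwa : ⟪w, Ls w⟫ = ⟪Ls w, w⟫ := real_inner_comm _ _
  have haa : ⟪a, Ls a⟫ = ⟪Ls a, a⟫ := real_inner_comm _ _
  have hxx : x ^ 2 = -2 * ⟪a, w⟫ := by
    rw [hx, LinearMap.add_apply, inner_add_left, hae]; linarith
  have hyy : y ^ 2 = -2 * ⟪L a, a⟫ := by
    rw [hy, LinearMap.add_apply, inner_add_left]; linarith
  have hcs : 12 * τ * (⟪a, a⟫ + ⟪L a, w⟫) ≤ 9 * x ^ 2 + 4 * τ ^ 2 * y ^ 2 := by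
    simp only [LinearMap.add_apply, map_add, map_smul, inner_add_left, inner_add_right,
      inner_smul_left, inner_smul_right, hae, RCLike.conj_to_real] at hv
    have r1 : ⟪Ls w, w⟫ = ⟪a, w⟫ := by linarith
    have r2 : ⟪Ls a, a⟫ = ⟪L a, a⟫ := by linarith
    have r3 : ⟪Ls w, a⟫ = ⟪L a, w⟫ := by rw [e3, real_inner_comm]
    have r4 : ⟪Ls a, w⟫ = ⟪a, a⟫ := by rw [e8, real_inner_comm]
    rw [r1, r2, r3, r4] at hv
    rw [hxx, hyy]
    linarith
  have key : ‖w + τ • a + (τ ^ 2 / 2) • L (a - p)‖ ^ 2 = ‖w‖ ^ 2 + 2 * τ * ⟪a, w⟫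
      + τ ^ 2 * ⟪a, a⟫ + τ ^ 2 * (⟪L a, w⟫ - ⟪L p, w⟫) + τ ^ 3 * (⟪L a, a⟫ - ⟪L p, a⟫)
      + τ ^ 4 / 4 * ‖L a - L p‖ ^ 2 := by
    rw [map_sub, ← inner_sub_left, ← inner_sub_left]
    generalize L a - L p = z
    simp only [← real_inner_self_eq_norm_sq, inner_add_left, inner_add_right,
      inner_smul_left, inner_smul_right, RCLike.conj_to_real]
    rw [real_inner_comm w a, real_inner_comm w z, real_inner_comm a z]
    ring
  refine my_le_of_sq_le_sq ?_ (norm_nonneg _)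
  rw [key, e4, e6, e5, e7]
  have t1 := mul_le_mul_of_nonneg_left hcs (by positivity : 0 ≤ τ / 12)
  have t2 := mul_le_mul_of_nonneg_left b6 (by positivity : 0 ≤ τ ^ 2)
  have t3 := mul_le_mul_of_nonneg_left b7 (by positivity : 0 ≤ τ ^ 3)
  have t4 := mul_le_mul_of_nonneg_left bq (by positivity : 0 ≤ τ ^ 4 / 4)
  have t5 := mul_le_mul_of_nonneg_left bp (by positivity : 0 ≤ τ ^ 4 / 2)
  have hfin := final_ineq c₁ c₃ c₄ (τ * s ^ 2) x (τ * y) h4 hl0 hlam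
  have hfin' := mul_le_mul_of_nonneg_left hfin hτ.le
  have hX : τ * ⟪a, w⟫ = -(τ * x ^ 2) / 2 := by rw [hxx]; ring
  have hY : τ ^ 3 * ⟪L a, a⟫ = -(τ ^ 3 * y ^ 2) / 2 := by rw [hyy]; ring
  ring_nf at *
  linarith
end

section
/- For all constants c₁, c₂, c₃ > 0 and every integer vector \underline{i} = (i₁, …, i_m) with m ≥ 2 and all entries ≥ 1, there exists C > 0 (depending only on c₁, c₂, c₃ and \underline{i}) with the following property. Let V be a real inner product space, L : V → V a semi-negative linear map with adjoint L*, P : V → V an orthogonal projection, and h > 0, such that for all w, v ∈ V: ‖P L w‖ ≤ c₁ h^{−1/2} |w|_Γ, ‖P L* w‖ ≤ c₁ h^{−1/2} |w|_Γ, |v|_Γ ≤ c₂ h^{−1/2} ‖v‖, and ‖L v‖ ≤ c₃ h^{−1} ‖v‖. Writing |\underline{i}| = i₁ + ⋯ + i_m and L^{\underline{i}} = L^{i₁} P L^{i₂} P ⋯ P L^{i_m}, one has for all w, v ∈ V: |⟨L^{\underline{i}} w, v⟩| ≤ C Σ_{j=0}^{i₁−1} h^{−|\underline{i}| + i_m +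 j} |L^{i_m − 1} w|_Γ |L^{j} v|_Γ. -/
open RealInnerProductSpace

/-- Alternating composition `L^{i₁} P L^{i₂} P ⋯ P L^{i_m}` associated with an
integer vector `(i₁, …, i_m)`. -/
def altComp {V : Type*} [AddCommGroup V] [Module ℝ V]
    (L P : V →ₗ[ℝ] V) : List ℕ → (V →ₗ[ℝ] V)
  | [] => 1
  | [i] => L ^ i
  | i :: rest => L ^ i * P * altComp L P rest


section helpers

variable {V : Type*} [NormedAddCommGroup V] [InnerProductSpace ℝ V]

lemma aux_jump_nonneg (L Lstar : V →ₗ[ℝ] V) (v : V) : 0 ≤ jumpSN L Lstar v :=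
  Real.sqrt_nonneg _

lemma aux_cs (L Lstar : V →ₗ[ℝ] V) (hadj : ∀ w v : V, ⟪L w, v⟫ = ⟪w, Lstar v⟫)
    (hneg : ∀ v : V, ⟪(L + Lstar) v, v⟫ ≤ 0) (x y : V) :
    |⟪x, (L + Lstar) y⟫| ≤ jumpSN L Lstar x * jumpSN L Lstar y := by
  have hsym : ⟪(L + Lstar) x, y⟫ = ⟪x, (L + Lstar) y⟫ := by
    have h1 := hadj x y
    have h2 := hadj y x
    simp only [LinearMap.add_apply, inner_add_left, inner_add_right]
    have h3 := real_inner_comm y (Lstar x)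
    have h4 := real_inner_comm x (L y)
    linarith
  have hq : ∀ t : ℝ, 0 ≤ (-⟪(L + Lstar) x, x⟫) * (t * t) + (-2 * ⟪x, (L + Lstar) y⟫) * t
      + (-⟪(L + Lstar) y, y⟫) := by
    intro t
    have h := hneg (t • x + y)
    rw [map_add, map_smul] at h
    simp only [inner_add_left, inner_add_right, real_inner_smul_left,
      real_inner_smul_right] at h
    rw [hsym, real_inner_comm x ((L + Lstar) y)] at h
    linarith
  have hd := discrim_le_zero hq
  unfold discrim at hd
  unfold jumpSN
  rw [← Real.sqrt_mul (by linarith [hneg x])]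
  apply Real.le_sqrt_of_sq_le
  rw [sq_abs]
  nlinarith

lemma aux_contr (P : V →ₗ[ℝ] V) (hP : ∀ w v : V, ⟪P w, v⟫ = ⟪w, P v⟫)
    (hPP : ∀ v : V, P (P v) = P v) (x : V) : ‖P x‖ ≤ ‖x‖ := by
  have h1 : ‖P x‖ * ‖P x‖ ≤ ‖x‖ * ‖P x‖ := by
    rw [← real_inner_self_eq_norm_mul_norm, hP, hPP]
    exact real_inner_le_norm _ _
  by_contra hc
  push Not at hc
  have := norm_nonneg x
  nlinarith

lemma aux_pow (L : V →ₗ[ℝ] V) (a : ℝ) (ha : 0 ≤ a) (hL : ∀ v : V, ‖L v‖ ≤ a * ‖v‖)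
    (n : ℕ) (v : V) : ‖(L ^ n) v‖ ≤ a ^ n * ‖v‖ := by
  induction n with
  | zero => simp
  | succ n ih =>
    rw [pow_succ', Module.End.mul_apply, pow_succ', mul_assoc]
    exact (hL _).trans (mul_le_mul_of_nonneg_left ih ha)

lemma aux_A (L Lstar P : V →ₗ[ℝ] V) (c₁ c₂ c₃ h : ℝ) (hc₁ : 0 < c₁) (hc₂ : 0 < c₂)
    (hc₃ : 0 < c₃) (hh : 0 < h)
    (hadj : ∀ w v : V, ⟪L w, v⟫ = ⟪w, Lstar v⟫)
    (hneg : ∀ v : V, ⟪(L + Lstar) v, v⟫ ≤ 0)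
    (hP : ∀ w v : V, ⟪P w, v⟫ = ⟪w, P v⟫)
    (hPLs : ∀ w : V, ‖P (Lstar w)‖ ≤ c₁ * h ^ (-(1 / 2) : ℝ) * jumpSN L Lstar w)
    (hj : ∀ v : V, jumpSN L Lstar v ≤ c₂ * h ^ (-(1 / 2) : ℝ) * ‖v‖)
    (hL : ∀ v : V, ‖L v‖ ≤ c₃ * h⁻¹ * ‖v‖) (u : V) (hu : P u = u) (n : ℕ) :
    ∀ v : V, |⟪(L ^ (n + 1)) u, v⟫| ≤ (c₁ + ∑ k ∈ Finset.range n, c₂ * c₃ ^ (k + 1)) * ‖u‖ *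
      ∑ j ∈ Finset.range (n + 1), h ^ (-(n : ℝ) - 1 / 2 + j) * jumpSN L Lstar ((L ^ j) v) := by
  induction n with
  | zero =>
    intro v
    have h1 : ⟪L u, v⟫ = ⟪u, P (Lstar v)⟫ := by
      rw [hadj, ← hP, hu]
    simp only [zero_add, pow_one, h1]
    refine (abs_real_inner_le_norm _ _).trans ?_
    refine (mul_le_mul_of_nonneg_left (hPLs v) (norm_nonneg _)).trans (le_of_eq ?_)
    have : (-((0:ℕ) : ℝ) - 1 / 2 + ((0:ℕ):ℝ)) = -(1 / 2) := by norm_num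
    simp only [Finset.sum_range_zero, Finset.sum_range_one, this, pow_zero, Module.End.one_apply]
    ring
  | succ n ih =>
    intro v
    have h1 : ⟪(L ^ (n + 1 + 1)) u, v⟫ =
        ⟪(L ^ (n + 1)) u, (L + Lstar) v⟫ - ⟪(L ^ (n + 1)) u, L v⟫ := by
      rw [pow_succ' L (n + 1), Module.End.mul_apply, hadj, LinearMap.add_apply, inner_add_right]
      ring
    have h2 := ih (L v)
    have h3 := aux_cs L Lstar hadj hneg ((L ^ (n + 1)) u) v
    have h4 : jumpSN L Lstar ((L ^ (n + 1)) u) ≤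
        c₂ * c₃ ^ (n + 1) * ‖u‖ * h ^ (-((n + 1 : ℕ) : ℝ) - 1 / 2) := by
      refine (hj _).trans ?_
      have h5 := aux_pow L (c₃ * h⁻¹) (by positivity) hL (n + 1) u
      refine (mul_le_mul_of_nonneg_left h5 (by positivity)).trans (le_of_eq ?_)
      rw [sub_eq_add_neg, Real.rpow_add hh, Real.rpow_neg hh.le ((n + 1 : ℕ) : ℝ),
        Real.rpow_natCast, mul_pow,
        inv_pow]
      ring
    have h6 : ∑ j ∈ Finset.range (n + 1 + 1),
        h ^ (-((n + 1 : ℕ) : ℝ) - 1 / 2 + j) * jumpSN L Lstar ((L ^ j) v) =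
        ∑ j ∈ Finset.range (n + 1), h ^ (-(n : ℝ) - 1 / 2 + j) * jumpSN L Lstar ((L ^ j) (L v))
        + h ^ (-((n + 1 : ℕ) : ℝ) - 1 / 2) * jumpSN L Lstar v := by
      rw [Finset.sum_range_succ']
      congr 1
      · refine Finset.sum_congr rfl fun j _ => ?_
        rw [pow_succ L j, Module.End.mul_apply]
        congr 2
        push_cast
        ring
      · simp
    rw [h6, h1, Finset.sum_range_succ]
    set S := ∑ j ∈ Finset.range (n + 1),
      h ^ (-(n : ℝ) - 1 / 2 + j) * jumpSN L Lstar ((L ^ j) (L v)) with hS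
    have hS0 : 0 ≤ S := Finset.sum_nonneg fun j _ =>
      mul_nonneg (by positivity) (aux_jump_nonneg _ _ _)
    set K := c₁ + ∑ k ∈ Finset.range n, c₂ * c₃ ^ (k + 1) with hK
    have hK0 : 0 ≤ K := by positivity
    set e := h ^ (-((n + 1 : ℕ) : ℝ) - 1 / 2) with he
    have he0 : 0 ≤ e := by positivity
    have hv0 := aux_jump_nonneg L Lstar v
    have h7 := h3.trans (mul_le_mul_of_nonneg_right h4 hv0)
    have h8 := abs_sub (⟪(L ^ (n + 1)) u, (L + Lstar) v⟫) (⟪(L ^ (n + 1)) u, L v⟫)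
    have hu0 := norm_nonneg u
    have h9 : 0 ≤ K * ‖u‖ * (e * jumpSN L Lstar v) := by positivity
    have h10 : 0 ≤ c₂ * c₃ ^ (n + 1) * ‖u‖ * S := by positivity
    rw [← add_assoc c₁, ← hK]
    linarith

lemma aux_altComp_cons (L P : V →ₗ[ℝ] V) (i : ℕ) (rest : List ℕ) (hr : rest ≠ []) :
    altComp L P (i :: rest) = L ^ i * P * altComp L P rest := by
  cases rest with
  | nil => exact absurd rfl hr
  | cons a t => simp [altComp]

lemma aux_B (L Lstar P : V →ₗ[ℝ] V) (c₁ c₃ h : ℝ)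
    (hc₃ : 0 < c₃) (hh : 0 < h)
    (hP : ∀ w v : V, ⟪P w, v⟫ = ⟪w, P v⟫)
    (hPP : ∀ v : V, P (P v) = P v)
    (hPL : ∀ w : V, ‖P (L w)‖ ≤ c₁ * h ^ (-(1 / 2) : ℝ) * jumpSN L Lstar w)
    (hL : ∀ v : V, ‖L v‖ ≤ c₃ * h⁻¹ * ‖v‖) (w : V) (l : List ℕ) (hl : l ≠ [])
    (hpos : ∀ x ∈ l, 1 ≤ x) :
    ‖P (altComp L P l w)‖ ≤ (c₃ * h⁻¹) ^ l.dropLast.sum *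
      (c₁ * h ^ (-(1 / 2) : ℝ) * jumpSN L Lstar ((L ^ (l.getLastD 0 - 1)) w)) := by
  induction l with
  | nil => exact absurd rfl hl
  | cons i t ih =>
    cases t with
    | nil =>
      have hi : 1 ≤ i := hpos i (by simp)
      obtain ⟨k, rfl⟩ := Nat.exists_eq_add_of_le' hi
      have := hPL ((L ^ k) w)
      simpa [altComp, pow_succ'] using this
    | cons a t =>
      rw [aux_altComp_cons L P i (a :: t) (by simp)]
      have h1 := ih (by simp) (fun x hx => hpos x (List.mem_cons_of_mem _ hx))
      simp only [Module.End.mul_apply]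
      refine (aux_contr P hP hPP _).trans ?_
      refine (aux_pow L (c₃ * h⁻¹) (by positivity) hL i _).trans ?_
      refine (mul_le_mul_of_nonneg_left h1 (by positivity)).trans (le_of_eq ?_)
      rw [← mul_assoc, ← pow_add]
      simp

lemma aux_sum (l : List ℕ) (hl : l ≠ []) : l.sum = l.dropLast.sum + l.getLastD 0 := by
  conv_lhs => rw [← List.dropLast_append_getLast hl]
  rw [List.sum_append, List.getLastD_eq_getLast?, List.getLast?_eq_getLast_of_ne_nil hl]
  simp

end helpers

/-- Lemma 3.11: for an integer vector `iv = (i₁,…,i_m)` with `m ≥ 2` and positive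
entries, `|⟪L^{iv} w, v⟫| ≤ C ∑_{j=0}^{i₁-1} h^{-|iv|+i_m+j} |L^{i_m-1} w|_Γ |L^j v|_Γ`. -/
theorem inner_altComp_bound :
    ∀ c₁ c₂ c₃ : ℝ, 0 < c₁ → 0 < c₂ → 0 < c₃ →
    ∀ iv : List ℕ, 2 ≤ iv.length → (∀ x ∈ iv, 1 ≤ x) →
    ∃ C > (0 : ℝ),
      ∀ (V : Type) [NormedAddCommGroup V] [InnerProductSpace ℝ V],
      ∀ L Lstar P : V →ₗ[ℝ] V,
        (∀ w v : V, ⟪L w, v⟫ = ⟪w, Lstar v⟫) →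
        (∀ v : V, ⟪(L + Lstar) v, v⟫ ≤ 0) →
        (∀ w v : V, ⟪P w, v⟫ = ⟪w, P v⟫) →
        (∀ v : V, P (P v) = P v) →
        ∀ h : ℝ, 0 < h →
        (∀ w : V, ‖P (L w)‖ ≤ c₁ * h ^ (-(1 / 2) : ℝ) * jumpSN L Lstar w) →
        (∀ w : V, ‖P (Lstar w)‖ ≤ c₁ * h ^ (-(1 / 2) : ℝ) * jumpSN L Lstar w) →
        (∀ v : V, jumpSN L Lstar v ≤ c₂ * h ^ (-(1 / 2) : ℝ) * ‖v‖) →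
        (∀ v : V, ‖L v‖ ≤ c₃ * h⁻¹ * ‖v‖) →
        ∀ w v : V,
          |⟪altComp L P iv w, v⟫|
            ≤ C * ∑ j ∈ Finset.range (iv.headD 0),
                h ^ (-(iv.sum : ℝ) + (iv.getLastD 0 : ℝ) + (j : ℝ))
                  * jumpSN L Lstar ((L ^ (iv.getLastD 0 - 1)) w)
                  * jumpSN L Lstar ((L ^ j) v) := by
  intro c₁ c₂ c₃ hc₁ hc₂ hc₃ iv hlen hpos
  match iv, hlen, hpos with
  | i :: a :: t, _, hpos =>
  obtain ⟨n, rfl⟩ := Nat.exists_eq_add_of_le' (hpos i (by simp))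
  refine ⟨(c₁ + ∑ k ∈ Finset.range n, c₂ * c₃ ^ (k + 1)) *
    (c₃ ^ (a :: t).dropLast.sum * c₁), by positivity, ?_⟩
  intro V _ _ L Lstar P hadj hneg hP hPP h hh hPL hPLs hj hL w v
  have hB := aux_B L Lstar P c₁ c₃ h hc₃ hh hP hPP hPL hL w (a :: t) (by simp)
    (fun x hx => hpos x (List.mem_cons_of_mem _ hx))
  have hA := aux_A L Lstar P c₁ c₂ c₃ h hc₁ hc₂ hc₃ hh hadj hneg hP hPLs hj hL
    (P (altComp L P (a :: t) w)) (hPP _) n v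
  have hs := aux_sum (a :: t) (by simp)
  have hlast : ((n + 1) :: a :: t).getLastD 0 = (a :: t).getLastD 0 := by simp
  have hsum : ((n + 1) :: a :: t).sum = n + 1 + (a :: t).sum := by simp
  rw [aux_altComp_cons L P (n + 1) (a :: t) (by simp), hlast, hsum, hs]
  simp only [Module.End.mul_apply, List.headD_cons]
  generalize (a :: t).getLastD 0 = m at *
  generalize (a :: t).dropLast.sum = d at *
  set J := jumpSN L Lstar ((L ^ (m - 1)) w) with hJ
  set K := c₁ + ∑ k ∈ Finset.range n, c₂ * c₃ ^ (k + 1) with hK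
  have hK0 : 0 ≤ K := by positivity
  refine hA.trans ?_
  have hS0 : 0 ≤ ∑ j ∈ Finset.range (n + 1),
      h ^ (-(n : ℝ) - 1 / 2 + j) * jumpSN L Lstar ((L ^ j) v) :=
    Finset.sum_nonneg fun j _ => mul_nonneg (by positivity) (aux_jump_nonneg _ _ _)
  refine (mul_le_mul_of_nonneg_right (mul_le_mul_of_nonneg_left hB hK0) hS0).trans (le_of_eq ?_)
  rw [Finset.mul_sum, Finset.mul_sum]
  refine Finset.sum_congr rfl fun j _ => ?_
  have he : h ^ (-((n + 1 + (d + m) : ℕ) : ℝ) + (m : ℝ) + (j : ℝ)) =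
      (h⁻¹) ^ d * h ^ (-(1 / 2) : ℝ) * h ^ (-(n : ℝ) - 1 / 2 + j) := by
    rw [inv_pow, ← Real.rpow_natCast, ← Real.rpow_neg hh.le, ← Real.rpow_add hh,
      ← Real.rpow_add hh]
    congr 1
    push_cast
    ring
  rw [he, mul_pow]
  ring
end

section
/- Let r ≥ 1 be an integer with r ≡ 1 (mod 4). There exist constants C > 0 and μ₀ > 0, depending only on r, with the following property: for every finite-dimensional real inner product space V, every semi-negative linear map L : V → V, and every τ > 0 with τ‖L‖ ≤ μ₀, the operator R = Σ_{i=0}^r (1/i!)(τL)^i satisfies ‖R w‖ ≤ (1 + C (τ‖L‖)^{r+1}) ‖w‖ for all w ∈ V. -/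
open RealInnerProductSpace

theorem exp_tail_bound {A : Type*} [NormedRing A] [NormedAlgebra ℝ A] [CompleteSpace A]
    (x : A) (n : ℕ) (hn : 0 < n) :
    ‖NormedSpace.exp x - ∑ i ∈ Finset.range n, (1 / (i.factorial : ℝ)) • x ^ i‖
      ≤ ‖x‖ ^ n * Real.exp ‖x‖ := by
  have h1 : HasSum (fun i : ℕ => (1 / (i.factorial : ℝ)) • x ^ i) (NormedSpace.exp x) := by
    simpa only [one_div] using NormedSpace.exp_series_hasSum_exp' (𝕂 := ℝ) x
  have h2 := (hasSum_nat_add_iff' n).2 h1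
  have h3 : HasSum (fun i : ℕ => ‖x‖ ^ i / (i.factorial : ℝ)) (Real.exp ‖x‖) := by
    rw [Real.exp_eq_exp_ℝ]
    exact NormedSpace.expSeries_div_hasSum_exp ‖x‖
  have h4 := h3.mul_left (‖x‖ ^ n)
  rw [← h2.tsum_eq]
  refine tsum_of_norm_bounded h4 fun i => ?_
  rw [norm_smul, Real.norm_of_nonneg (by positivity)]
  calc 1 / ((i + n).factorial : ℝ) * ‖x ^ (i + n)‖
      ≤ 1 / (i.factorial : ℝ) * ‖x‖ ^ (i + n) := by
        gcongr
        · omega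
        · exact norm_pow_le' x (by omega)
    _ = _ := by rw [pow_add]; ring

theorem exp_contraction {V : Type*} [NormedAddCommGroup V] [InnerProductSpace ℝ V]
    [CompleteSpace V] (A : V →L[ℝ] V) (hA : ∀ v : V, ⟪A v, v⟫ ≤ 0) (w : V) :
    ‖NormedSpace.exp A w‖ ≤ ‖w‖ := by
  have hd : ∀ t : ℝ, HasDerivAt (fun t : ℝ => NormedSpace.exp (t • A) w)
      (A (NormedSpace.exp (t • A) w)) t := by
    intro t
    have h := (hasDerivAt_exp_smul_const' (𝕂 := ℝ) A t).clm_apply (hasDerivAt_const t w)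
    simpa using h
  have hd2 := fun t => (hd t).norm_sq
  have hanti : Antitone (fun t : ℝ => ‖NormedSpace.exp (t • A) w‖ ^ 2) := by
    refine antitone_of_deriv_nonpos (fun t => (hd2 t).differentiableAt) fun t => ?_
    rw [(hd2 t).deriv, real_inner_comm]
    linarith [hA (NormedSpace.exp (t • A) w)]
  have h := hanti (zero_le_one (α := ℝ))
  simp only [one_smul, zero_smul, NormedSpace.exp_zero, ContinuousLinearMap.one_apply] at h
  exact (sq_le_sq₀ (norm_nonneg _) (norm_nonneg _)).1 h

/-- Weak(r+1) stability of the r-stage r-th order RK method for `r ≡ 1 (mod 4)`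
(Theorem 3.8, case 1): for a semi-negative `L` and `τ‖L‖ ≤ μ₀`, the operator
`R = ∑_{i=0}^r (1/i!)(τL)^i` satisfies `‖R w‖ ≤ (1 + C(τ‖L‖)^{r+1})‖w‖`. -/
theorem rk_weak_stability_mod_one (r : ℕ) (hr : 1 ≤ r) (hmod : r % 4 = 1) :
    ∃ C > (0 : ℝ), ∃ μ₀ > (0 : ℝ),
      ∀ (V : Type) [NormedAddCommGroup V] [InnerProductSpace ℝ V] [FiniteDimensional ℝ V],
      ∀ L Lstar : V →L[ℝ] V,
        (∀ w v : V, ⟪L w, v⟫ = ⟪w, Lstar v⟫) →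
        (∀ v : V, ⟪(L + Lstar) v, v⟫ ≤ 0) →
        ∀ τ : ℝ, 0 < τ → τ * ‖L‖ ≤ μ₀ →
        ∀ w : V,
          ‖(∑ i ∈ Finset.range (r + 1), (1 / (i.factorial : ℝ)) • (τ • L) ^ i) w‖
            ≤ (1 + C * (τ * ‖L‖) ^ (r + 1)) * ‖w‖ := by
  refine ⟨Real.exp 1, Real.exp_pos 1, 1, one_pos, ?_⟩
  intro V _ _ _ L Lstar hadj hneg τ hτ hμ w
  haveI : CompleteSpace V := FiniteDimensional.complete ℝ V
  have hn : ‖τ • L‖ = τ * ‖L‖ := by rw [norm_smul, Real.norm_of_nonneg hτ.le]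
  have hA : ∀ v : V, ⟪(τ • L) v, v⟫ ≤ 0 := by
    intro v
    have h := hneg v
    rw [ContinuousLinearMap.add_apply, inner_add_left, real_inner_comm v (Lstar v),
      ← hadj v v] at h
    rw [ContinuousLinearMap.smul_apply, real_inner_smul_left]
    exact mul_nonpos_of_nonneg_of_nonpos hτ.le (by linarith)
  have h1 := exp_contraction (τ • L) hA w
  have h2 := exp_tail_bound (τ • L) (r + 1) (Nat.succ_pos r)
  set S := ∑ i ∈ Finset.range (r + 1), (1 / (i.factorial : ℝ)) • (τ • L) ^ i with hS
  have h3 : ‖(NormedSpace.exp (τ • L) - S) w‖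
      ≤ Real.exp 1 * (τ * ‖L‖) ^ (r + 1) * ‖w‖ := by
    refine (ContinuousLinearMap.le_opNorm _ w).trans ?_
    refine mul_le_mul_of_nonneg_right (h2.trans ?_) (norm_nonneg w)
    rw [hn, mul_comm]
    have := norm_nonneg L
    gcongr
  have h4 : S w = NormedSpace.exp (τ • L) w - (NormedSpace.exp (τ • L) - S) w := by
    simp [ContinuousLinearMap.sub_apply]
  rw [h4]
  refine (norm_sub_le _ _).trans ?_
  linarith
end

section
/- Let r ≥ 2 be an integer with r ≡ 2 (mod 4). There exist constants C > 0 and μ₀ > 0, depending only on r, with the following property: for every finite-dimensional real inner product space V, every semi-negative linear map L : V → V, and every τ > 0 with τ‖L‖ ≤ μ₀, the operator R = Σ_{i=0}^r (1/i!)(τL)^i satisfies ‖R w‖ ≤ (1 + C (τ‖L‖)^{r+2}) ‖w‖ for all w ∈ V. -/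
open RealInnerProductSpace

namespace RKWeak
open Polynomial

/-- Even parts of the diagonal Padé numerators of `exp`. -/
noncomputable def Ev : ℕ → ℝ[X]
  | 0 => 1
  | 1 => C 2
  | (k + 2) => C (4 * (k : ℝ) + 6) * Ev (k + 1) + X ^ 2 * Ev k

/-- Odd parts of the diagonal Padé numerators of `exp`. -/
noncomputable def Od : ℕ → ℝ[X]
  | 0 => 0
  | 1 => X
  | (k + 2) => C (4 * (k : ℝ) + 6) * Od (k + 1) + X ^ 2 * Od k

lemma Ev_coeff_zero_pos (k : ℕ) : 0 < (Ev k).coeff 0 ∧ 0 < (Ev (k + 1)).coeff 0 := by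
  induction k with
  | zero => simp [Ev]
  | succ k ih =>
    refine ⟨ih.2, ?_⟩
    have : (Ev (k + 2)).coeff 0 = (4 * (k : ℝ) + 6) * (Ev (k + 1)).coeff 0 := by
      simp [Ev, mul_coeff_zero]
    rw [show k + 1 + 1 = k + 2 from rfl, this]
    have := ih.2
    positivity

lemma Od_coeff_zero (k : ℕ) : (Od k).coeff 0 = 0 ∧ (Od (k + 1)).coeff 0 = 0 := by
  induction k with
  | zero => simp [Od]
  | succ k ih =>
    refine ⟨ih.2, ?_⟩
    simp [Od, mul_coeff_zero, ih.2]

section op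
variable {V : Type} [NormedAddCommGroup V] [InnerProductSpace ℝ V]

lemma diss_step (A : V →L[ℝ] V) (hA : ∀ v : V, ⟪A v, v⟫ ≤ 0) (N D : ℝ[X]) (b : ℝ) (hb : 0 ≤ b)
    (h : ∀ v : V, ⟪aeval A N v, aeval A D v⟫ ≤ 0) (v : V) :
    ⟪aeval A (X * D) v, aeval A (C b * D + X * N) v⟫ ≤ 0 := by
  have e1 : aeval A (X * D) v = A (aeval A D v) := by simp
  have e2 : aeval A (X * D) v = aeval A D (A v) := by rw [mul_comm]; simp
  have e3 : aeval A (X * N) v = aeval A N (A v) := by rw [mul_comm]; simp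
  have e4 : aeval A (C b * D + X * N) v = b • aeval A D v + aeval A N (A v) := by
    rw [map_add, ContinuousLinearMap.add_apply, e3, ← smul_eq_C_mul, map_smul]
    rfl
  rw [e4, inner_add_right, inner_smul_right]
  have h1 : ⟪aeval A (X * D) v, aeval A D v⟫ ≤ 0 := by rw [e1]; exact hA _
  have h2 : ⟪aeval A (X * D) v, aeval A N (A v)⟫ ≤ 0 := by
    rw [e2, real_inner_comm]; exact h _
  have := mul_nonneg hb (neg_nonneg.2 h1)
  linarith

lemma diss_all (A : V →L[ℝ] V) (hA : ∀ v : V, ⟪A v, v⟫ ≤ 0) (k : ℕ) : ∀ (N D : ℝ[X])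
    (_ : ∀ v : V, ⟪aeval A N v, aeval A D v⟫ ≤ 0) (v : V),
    ⟪aeval A (D * Od (k + 1) + X * N * Od k) v, aeval A (D * Ev (k + 1) + X * N * Ev k) v⟫ ≤ 0 := by
  induction k with
  | zero =>
    intro N D h v
    have := diss_step A hA N D 2 (by norm_num) h v
    have e1 : D * Od (0 + 1) + X * N * Od 0 = X * D := by simp [Od]; ring
    have e2 : D * Ev (0 + 1) + X * N * Ev 0 = C 2 * D + X * N := by simp only [Ev]; ring
    rw [e1, e2]; exact this
  | succ k ih =>
    intro N D h v
    have := ih (X * D) (C (4 * (k : ℝ) + 6) * D + X * N)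
      (diss_step A hA N D _ (by positivity) h) v
    have e1 : D * Od (k + 1 + 1) + X * N * Od (k + 1) =
      (C (4 * (k : ℝ) + 6) * D + X * N) * Od (k + 1) + X * (X * D) * Od k := by
      simp only [Od]; ring
    have e2 : D * Ev (k + 1 + 1) + X * N * Ev (k + 1) =
      (C (4 * (k : ℝ) + 6) * D + X * N) * Ev (k + 1) + X * (X * D) * Ev k := by
      simp only [Ev]; ring
    rw [e1, e2]; exact this

lemma contr (A : V →L[ℝ] V) (hA : ∀ v : V, ⟪A v, v⟫ ≤ 0) (E O : ℝ[X])
    (h : ∀ v : V, ⟪aeval A O v, aeval A E v⟫ ≤ 0) (v : V) :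
    ‖aeval A (E + O) v‖ ≤ ‖aeval A (E - O) v‖ := by
  have h1 : ‖aeval A (E + O) v‖ ^ 2 ≤ ‖aeval A (E - O) v‖ ^ 2 := by
    rw [map_add, map_sub, ContinuousLinearMap.add_apply, ContinuousLinearMap.sub_apply,
      norm_add_sq_real, norm_sub_sq_real]
    have := h v
    rw [real_inner_comm] at this
    linarith
  exact le_of_sq_le_sq h1 (norm_nonneg _)

end op

lemma poly_bound (p : ℝ[X]) : ∃ K > (0 : ℝ), ∀ (V : Type) [NormedAddCommGroup V]
    [InnerProductSpace ℝ V] (A : V →L[ℝ] V), ‖A‖ ≤ 1 → ∀ v : V, ‖aeval A p v‖ ≤ K * ‖v‖ := by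
  induction p using Polynomial.induction_on' with
  | add p q hp hq =>
    obtain ⟨K, hK, h⟩ := hp
    obtain ⟨K', hK', h'⟩ := hq
    refine ⟨K + K', by positivity, fun V _ _ A hA v => ?_⟩
    rw [map_add, ContinuousLinearMap.add_apply, add_mul]
    exact (norm_add_le _ _).trans (add_le_add (h V A hA v) (h' V A hA v))
  | monomial n a =>
    refine ⟨|a| + 1, by positivity, fun V _ _ A hA v => ?_⟩
    have hp : ‖(A ^ n) v‖ ≤ ‖v‖ := by
      induction n with
      | zero => simp
      | succ n ih =>
        rw [pow_succ']
        calc ‖A ((A ^ n) v)‖ ≤ ‖A‖ * ‖(A ^ n) v‖ := A.le_opNorm _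
          _ ≤ 1 * ‖(A ^ n) v‖ := by gcongr
          _ ≤ ‖v‖ := by simpa using ih
    have e : aeval A (monomial n a) v = a • (A ^ n) v := by
      rw [← C_mul_X_pow_eq_monomial, ← smul_eq_C_mul, map_smul, map_pow, aeval_X]
      rfl
    rw [e, norm_smul, Real.norm_eq_abs]
    have := norm_nonneg v
    have := mul_le_mul_of_nonneg_left hp (abs_nonneg a)
    linarith

lemma norm_pow_apply_le {V : Type} [NormedAddCommGroup V] [InnerProductSpace ℝ V]
    (A : V →L[ℝ] V) (n : ℕ) (v : V) : ‖(A ^ n) v‖ ≤ ‖A‖ ^ n * ‖v‖ := by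
  induction n with
  | zero => simp
  | succ n ih =>
    rw [pow_succ']
    calc ‖A ((A ^ n) v)‖ ≤ ‖A‖ * ‖(A ^ n) v‖ := A.le_opNorm _
      _ ≤ ‖A‖ * (‖A‖ ^ n * ‖v‖) := by gcongr
      _ = ‖A‖ ^ (n + 1) * ‖v‖ := by ring

/-- coefficients of the Padé remainder -/
noncomputable def ac (k n : ℕ) : ℝ :=
  (-1) ^ (k + 1) * ((k + n).factorial : ℝ) / (n.factorial * (2 * k + n + 1).factorial)

lemma ac_rec (k : ℕ) : (PowerSeries.X : PowerSeries ℝ) ^ 2 * PowerSeries.mk (ac (k + 2)) =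
    PowerSeries.C (4 * (k : ℝ) + 6) * PowerSeries.mk (ac (k + 1)) + PowerSeries.mk (ac k) := by
  ext n
  rw [PowerSeries.coeff_X_pow_mul', map_add, PowerSeries.coeff_C_mul]
  simp only [PowerSeries.coeff_mk]
  have f1 : ∀ n : ℕ, ((n + 1).factorial : ℝ) = (n + 1) * n.factorial := by
    intro n; rw [Nat.factorial_succ]; push_cast; ring
  have fp : ∀ n : ℕ, (n.factorial : ℝ) ≠ 0 := fun n => by positivity
  rcases n with _ | _ | n
  · simp only [ac]
    norm_num
    have : (2 * (k + 1) + 1).factorial = (2 * k + 1 + 1 + 1).factorial := by congr 1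
    rw [this, f1 (2 * k + 1 + 1), f1 (2 * k + 1), f1 k]
    have := fp k
    have := fp (2 * k + 1)
    push_cast
    field_simp
    ring
  · simp only [ac]
    norm_num
    have : (2 * (k + 1) + 1 + 1).factorial = (2 * k + 1 + 1 + 1 + 1).factorial := by congr 1
    rw [this, f1 (2 * k + 1 + 1 + 1), f1 (2 * k + 1 + 1), f1 (k + 1)]
    have := fp (k + 1)
    have := fp (2 * k + 1 + 1)
    push_cast
    field_simp
    ring
  · simp only [ac]
    rw [if_pos (by omega), show n + 1 + 1 - 2 = n by omega,
      show k + 2 + n = (k + n + 1) + 1 by ring, show 2 * (k + 2) + n + 1 = 2 * k + n + 3 + 1 + 1 by ring,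
      show k + 1 + (n + 1 + 1) = k + n + 1 + 1 + 1 by ring,
      show 2 * (k + 1) + (n + 1 + 1) + 1 = 2 * k + n + 3 + 1 + 1 by ring,
      show k + (n + 1 + 1) = k + n + 1 + 1 by ring,
      show 2 * k + (n + 1 + 1) + 1 = 2 * k + n + 3 by ring,
      f1 (2 * k + n + 3 + 1), f1 (2 * k + n + 3), f1 (k + n + 1 + 1), f1 (n + 1), f1 n]
    have := fp (k + n + 1 + 1)
    have := fp (2 * k + n + 3)
    have := fp n
    push_cast
    field_simp
    ring

lemma pade (k : ℕ) :
    ((Ev k + Od k : ℝ[X]) : PowerSeries ℝ) - PowerSeries.exp ℝ * ((Ev k - Od k : ℝ[X]) : PowerSeries ℝ)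
      = PowerSeries.X ^ (2 * k + 1) * PowerSeries.mk (ac k) ∧
    ((Ev (k + 1) + Od (k + 1) : ℝ[X]) : PowerSeries ℝ)
      - PowerSeries.exp ℝ * ((Ev (k + 1) - Od (k + 1) : ℝ[X]) : PowerSeries ℝ)
      = PowerSeries.X ^ (2 * (k + 1) + 1) * PowerSeries.mk (ac (k + 1)) := by
  have f1 : ∀ n : ℕ, ((n + 1).factorial : ℝ) = (n + 1) * n.factorial := by
    intro n; rw [Nat.factorial_succ]; push_cast; ring
  have fp : ∀ n : ℕ, (n.factorial : ℝ) ≠ 0 := fun n => by positivity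
  induction k with
  | zero =>
    constructor
    · ext n
      rw [PowerSeries.coeff_X_pow_mul']
      rcases n with _ | n
      · simp [Ev, Od]
      · have := fp n
        simp [Ev, Od, ac, PowerSeries.coeff_exp, PowerSeries.coeff_one]
        field_simp
    · ext n
      rw [PowerSeries.coeff_X_pow_mul']
      simp only [Ev, Od, Polynomial.coe_add, Polynomial.coe_sub, Polynomial.coe_C, Polynomial.coe_X,
        mul_sub, map_sub, map_add, PowerSeries.coeff_mul_C, PowerSeries.coeff_mk]
      rcases n with _ | _ | _ | n
      · simp [PowerSeries.coeff_C, PowerSeries.coeff_X, PowerSeries.coeff_exp]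
      · simp [PowerSeries.coeff_C, PowerSeries.coeff_X, PowerSeries.coeff_exp,
          PowerSeries.coeff_succ_mul_X]
        try norm_num
      · simp [PowerSeries.coeff_C, PowerSeries.coeff_X, PowerSeries.coeff_exp,
          PowerSeries.coeff_succ_mul_X]
        try norm_num
      · rw [PowerSeries.coeff_succ_mul_X]
        simp [PowerSeries.coeff_C, PowerSeries.coeff_X, PowerSeries.coeff_exp, ac]
        rw [show 2 + n + 1 = n + 1 + 1 + 1 by ring, show 1 + n = n + 1 by ring,
          f1 (n + 1 + 1), f1 (n + 1), f1 n]
        have := fp n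
        push_cast
        field_simp
        ring
  | succ k ih =>
    refine ⟨ih.2, ?_⟩
    obtain ⟨h1, h2⟩ := ih
    have e1 : Ev (k + 1 + 1) = C (4 * (k : ℝ) + 6) * Ev (k + 1) + X ^ 2 * Ev k := by simp only [Ev]
    have e2 : Od (k + 1 + 1) = C (4 * (k : ℝ) + 6) * Od (k + 1) + X ^ 2 * Od k := by simp only [Od]
    rw [e1, e2]
    have h3 := ac_rec k
    simp only [Polynomial.coe_add, Polynomial.coe_sub, Polynomial.coe_mul, Polynomial.coe_pow,
      Polynomial.coe_C, Polynomial.coe_X] at *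
    linear_combination (PowerSeries.C (4 * (k : ℝ) + 6)) * h2 + PowerSeries.X ^ 2 * h1
      - PowerSeries.X ^ (2 * k + 3) * h3

/-- Truncated exponential. -/
noncomputable def T (r : ℕ) : ℝ[X] := ∑ i ∈ Finset.range (r + 1), C (1 / (i.factorial : ℝ)) * X ^ i

lemma exp_sub_T (r : ℕ) : ∃ G : PowerSeries ℝ, PowerSeries.coeff 0 G = 1 / ((r + 1).factorial : ℝ) ∧
    PowerSeries.exp ℝ - (T r : PowerSeries ℝ) = PowerSeries.X ^ (r + 1) * G := by
  refine ⟨PowerSeries.mk fun n => 1 / ((n + (r + 1)).factorial : ℝ), by simp, ?_⟩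
  ext n
  rw [PowerSeries.coeff_X_pow_mul', map_sub, Polynomial.coeff_coe]
  have : (T r).coeff n = if n < r + 1 then 1 / (n.factorial : ℝ) else 0 := by
    simp only [T, finset_sum_coeff, coeff_C_mul_X_pow]
    rw [Finset.sum_ite_eq]
    simp
  rw [this, PowerSeries.coeff_exp]
  by_cases h : n < r + 1
  · rw [if_pos h, if_neg (by omega)]; simp
  · rw [if_neg h, if_pos (by omega), PowerSeries.coeff_mk, Nat.sub_add_cancel (by omega)]; simp

lemma key (k : ℕ) (hk : Even k) : ∃ b > (0 : ℝ),
    X ^ (2 * (k + 1) + 2) ∣ T (2 * (k + 1)) * ((C b * Ev (k + 1) + X * X * Ev k)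
        - (C b * Od (k + 1) + X * X * Od k))
      - ((C b * Ev (k + 1) + X * X * Ev k) + (C b * Od (k + 1) + X * X * Od k)) := by
  obtain ⟨G, hG, hT⟩ := exp_sub_T (2 * (k + 1))
  set c : ℝ := (Ev (k + 1)).coeff 0 with hc
  have hcpos : 0 < c := (Ev_coeff_zero_pos k).2
  set f : ℝ := 1 / ((2 * (k + 1) + 1).factorial : ℝ) with hf
  have hfpos : 0 < f := by positivity
  have ha0 : ac k 0 < 0 := by
    simp only [ac, hk.add_one.neg_one_pow]
    rw [neg_one_mul, neg_div]
    have : 0 < ((k + 0).factorial : ℝ) / (Nat.factorial 0 * (2 * k + 0 + 1).factorial) := by positivity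
    linarith
  have ha1 : 0 < ac (k + 1) 0 := by
    simp only [ac, hk.add_one.add_one.neg_one_pow]
    positivity
  have hden : 0 < ac (k + 1) 0 + f * c := by positivity
  set b : ℝ := - ac k 0 / (ac (k + 1) 0 + f * c) with hb
  have hbpos : 0 < b := div_pos (by linarith) hden
  have hbe : b * (ac (k + 1) 0 + f * c) = - ac k 0 := by rw [hb]; field_simp
  refine ⟨b, hbpos, ?_⟩
  set M := (C b * Ev (k + 1) + X * X * Ev k) - (C b * Od (k + 1) + X * X * Od k) with hM
  set Q := (C b * Ev (k + 1) + X * X * Ev k) + (C b * Od (k + 1) + X * X * Od k) with hQ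
  have hM0 : M.coeff 0 = b * c := by
    simp [hM, mul_coeff_zero, (Od_coeff_zero k).2, hc]
  set H : PowerSeries ℝ := PowerSeries.C b * PowerSeries.mk (ac (k + 1)) + PowerSeries.mk (ac k)
    + G * (M : PowerSeries ℝ) with hH
  have hmain : ((T (2 * (k + 1)) * M - Q : ℝ[X]) : PowerSeries ℝ)
      = PowerSeries.X ^ (2 * (k + 1) + 1) * (-H) := by
    obtain ⟨h1, h2⟩ := pade k
    rw [hH, hM, hQ]
    simp only [Polynomial.coe_add, Polynomial.coe_sub, Polynomial.coe_mul, Polynomial.coe_pow,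
      Polynomial.coe_C, Polynomial.coe_X] at *
    linear_combination -(PowerSeries.C b) * h2 - PowerSeries.X ^ 2 * h1
      - ((PowerSeries.C b * (Ev (k + 1) : PowerSeries ℝ)
          + PowerSeries.X * PowerSeries.X * (Ev k : PowerSeries ℝ))
        - (PowerSeries.C b * (Od (k + 1) : PowerSeries ℝ)
          + PowerSeries.X * PowerSeries.X * (Od k : PowerSeries ℝ))) * hT
  have hH0 : PowerSeries.coeff 0 H = 0 := by
    rw [hH, map_add, map_add, PowerSeries.coeff_C_mul, PowerSeries.coeff_mk, PowerSeries.coeff_mk,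
      PowerSeries.coeff_mul, Finset.Nat.antidiagonal_zero, Finset.sum_singleton, hG,
      Polynomial.coeff_coe, hM0]
    linear_combination hbe
  rw [Polynomial.X_pow_dvd_iff]
  intro d hd
  rw [← Polynomial.coeff_coe, hmain, PowerSeries.coeff_X_pow_mul']
  split_ifs with h
  · rw [show d - (2 * (k + 1) + 1) = 0 by omega, map_neg, hH0, neg_zero]
  · rfl

end RKWeak

open RKWeak Polynomial in
/-- Weak(r+2) stability of the r-stage r-th order RK method for `r ≡ 2 (mod 4)`
(Theorem 3.8, case 2): for a semi-negative `L` and `τ‖L‖ ≤ μ₀`, the operator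
`R = ∑_{i=0}^r (1/i!)(τL)^i` satisfies `‖R w‖ ≤ (1 + C(τ‖L‖)^{r+2})‖w‖`. -/
theorem rk_weak_stability_mod_two (r : ℕ) (hr : 2 ≤ r) (hmod : r % 4 = 2) :
    ∃ C > (0 : ℝ), ∃ μ₀ > (0 : ℝ),
      ∀ (V : Type) [NormedAddCommGroup V] [InnerProductSpace ℝ V] [FiniteDimensional ℝ V],
      ∀ L Lstar : V →L[ℝ] V,
        (∀ w v : V, ⟪L w, v⟫ = ⟪w, Lstar v⟫) →
        (∀ v : V, ⟪(L + Lstar) v, v⟫ ≤ 0) →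
        ∀ τ : ℝ, 0 < τ → τ * ‖L‖ ≤ μ₀ →
        ∀ w : V,
          ‖(∑ i ∈ Finset.range (r + 1), (1 / (i.factorial : ℝ)) • (τ • L) ^ i) w‖
            ≤ (1 + C * (τ * ‖L‖) ^ (r + 2)) * ‖w‖ := by
  obtain ⟨k, hk, rfl⟩ : ∃ k, Even k ∧ r = 2 * (k + 1) :=
    ⟨2 * (r / 4), even_two_mul _, by omega⟩
  obtain ⟨b, hb, W, hW⟩ := key k hk
  set E := (Polynomial.C b * Ev (k + 1) + X * X * Ev k) with hE
  set O := (Polynomial.C b * Od (k + 1) + X * X * Od k) with hO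
  set c : ℝ := (E - O).coeff 0 with hc
  have hcpos : 0 < c := by
    have : c = b * (Ev (k + 1)).coeff 0 := by
      simp [hc, hE, hO, mul_coeff_zero, (Od_coeff_zero k).2]
    rw [this]
    exact mul_pos hb (Ev_coeff_zero_pos k).2
  obtain ⟨K, hK, hKb⟩ := poly_bound W
  obtain ⟨K', hK', hKb'⟩ := poly_bound (E - O).divX
  refine ⟨K * (2 / c), by positivity, min 1 (c / (2 * K')), by positivity, ?_⟩
  intro V _ _ _ L Lstar hadj hneg τ hτ hsmall w
  set A := τ • L with hAdef
  have hAn : ‖A‖ = τ * ‖L‖ := by rw [hAdef, norm_smul, Real.norm_of_nonneg hτ.le]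
  rw [← hAn] at hsmall ⊢
  have hA1 : ‖A‖ ≤ 1 := hsmall.trans (min_le_left _ _)
  have hA2 : ‖A‖ ≤ c / (2 * K') := hsmall.trans (min_le_right _ _)
  have hA : ∀ v : V, ⟪A v, v⟫ ≤ 0 := by
    intro v
    have h1 := hneg v
    rw [ContinuousLinearMap.add_apply, inner_add_left, real_inner_comm v (Lstar v), ← hadj v v] at h1
    rw [hAdef, ContinuousLinearMap.smul_apply, real_inner_smul_left]
    nlinarith
  have hcon : ∀ v : V, ‖aeval A (E + O) v‖ ≤ ‖aeval A (E - O) v‖ := by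
    refine contr A hA E O ?_
    refine diss_all A hA k X (Polynomial.C b) ?_
    intro v
    have : aeval A (Polynomial.C b) v = b • v := by
      rw [aeval_C, Algebra.algebraMap_eq_smul_one]; rfl
    rw [this, aeval_X, real_inner_smul_right]
    have := hA v
    nlinarith
  have hlow : ∀ v : V, c / 2 * ‖v‖ ≤ ‖aeval A (E - O) v‖ := by
    intro v
    have e : aeval A (E - O) v = A (aeval A (E - O).divX v) + c • v := by
      conv_lhs => rw [← X_mul_divX_add (E - O)]
      rw [map_add, map_mul, aeval_X, aeval_C, Algebra.algebraMap_eq_smul_one]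
      rfl
    have h1 : ‖A (aeval A (E - O).divX v)‖ ≤ c / 2 * ‖v‖ := by
      calc _ ≤ ‖A‖ * ‖aeval A (E - O).divX v‖ := A.le_opNorm _
        _ ≤ c / (2 * K') * (K' * ‖v‖) := by gcongr; exact hKb' V A hA1 v
        _ = c / 2 * ‖v‖ := by field_simp
    have h2 : ‖c • v‖ = c * ‖v‖ := by rw [norm_smul, Real.norm_of_nonneg hcpos.le]
    have h3 : ‖c • v‖ ≤ ‖aeval A (E - O) v‖ + ‖A (aeval A (E - O).divX v)‖ := by
      have : c • v = aeval A (E - O) v - A (aeval A (E - O).divX v) := by rw [e]; abel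
      rw [this]; exact norm_sub_le _ _
    linarith
  have hinj : Function.Injective ((aeval A (E - O) : V →L[ℝ] V) : V →ₗ[ℝ] V) := by
    rw [injective_iff_map_eq_zero]
    intro v hv
    have h1 := hlow v
    have hv' : aeval A (E - O) v = 0 := hv
    rw [hv', norm_zero] at h1
    have : ‖v‖ ≤ 0 := by
      by_contra h
      push Not at h
      have : 0 < c / 2 * ‖v‖ := by positivity
      linarith
    exact norm_le_zero_iff.1 this
  obtain ⟨v, hv⟩ := LinearMap.surjective_of_injective hinj w
  have hv : aeval A (E - O) v = w := hv
  have hR : (∑ i ∈ Finset.range (2 * (k + 1) + 1), (1 / (i.factorial : ℝ)) • A ^ i)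
      = aeval A (T (2 * (k + 1))) := by
    simp only [T, map_sum, ← smul_eq_C_mul, map_smul, map_pow, aeval_X]
  have hRw : aeval A (T (2 * (k + 1))) w
      = aeval A (E + O) v + (A ^ (2 * (k + 1) + 2)) (aeval A W v) := by
    have h1 : T (2 * (k + 1)) * (E - O) = (E + O) + X ^ (2 * (k + 1) + 2) * W := by
      rw [← hW]; ring
    have h2 := congrArg (fun p => aeval A p v) h1
    simp only [map_mul, map_add (aeval A) (E + O), map_pow, aeval_X] at h2
    rw [← hv]
    exact h2
  rw [hR, hRw]
  have hvw : ‖v‖ ≤ 2 / c * ‖w‖ := by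
    have := hlow v
    rw [hv] at this
    rw [div_mul_eq_mul_div, le_div_iff₀ hcpos]
    linarith
  calc _ ≤ ‖aeval A (E + O) v‖ + ‖(A ^ (2 * (k + 1) + 2)) (aeval A W v)‖ := norm_add_le _ _
    _ ≤ ‖w‖ + ‖A‖ ^ (2 * (k + 1) + 2) * (K * (2 / c * ‖w‖)) := by
      gcongr
      · rw [← hv]; exact hcon v
      · refine (norm_pow_apply_le A _ _).trans ?_
        gcongr
        refine (hKb V A hA1 v).trans ?_
        gcongr
    _ = _ := by ring
end

section
/- Let r ≥ 4 be an integer with r ≡ 0 (mod 4). There exists a constant μ₀ > 0, depending only on r, with the following property: for every finite-dimensional real inner product space V, every semi-negative linear map L : V → V, and every τ > 0 with τ‖L‖ ≤ μ₀, the operator R = Σ_{i=0}^r (1/i!)(τL)^i satisfies ‖R^m w‖ ≤ ‖w‖ for all w ∈ V and every integer m ≥ 2. -/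
open RealInnerProductSpace

open Polynomial in
lemma rk_ibp (f w : ℝ[X]) (h0 : (f * w).eval 0 = 0) (h1 : (f * w).eval 1 = 0) :
    ∫ s in (0:ℝ)..1, f.eval s * w.derivative.eval s
      = -∫ s in (0:ℝ)..1, f.derivative.eval s * w.eval s := by
  rw [intervalIntegral.integral_mul_deriv_eq_deriv_mul (u := fun s => f.eval s)
    (v := fun s => w.eval s) (u' := fun s => f.derivative.eval s)
    (fun s _ => f.hasDerivAt s) (fun s _ => w.hasDerivAt s)
    (f.derivative.continuous.intervalIntegrable _ _)
    (w.derivative.continuous.intervalIntegrable _ _)]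
  rw [eval_mul] at h0 h1
  simp [h0, h1]

open Polynomial in
lemma rk_ibp_iter (p : ℕ) (f : ℝ[X]) (j : ℕ) (hj : j ≤ p) :
    ∫ s in (0:ℝ)..1, f.eval s * (derivative^[j] ((X * (X - 1) : ℝ[X]) ^ p)).eval s
      = (-1) ^ j * ∫ s in (0:ℝ)..1, (derivative^[j] f).eval s * (s * (s - 1)) ^ p := by
  induction j generalizing f with
  | zero => simp
  | succ j ih =>
    have hd : (X * (X - 1) : ℝ[X]) ∣ derivative^[j] ((X * (X - 1) : ℝ[X]) ^ p) :=
      (dvd_pow_self _ (by omega)).trans (pow_sub_dvd_iterate_derivative_pow _ p j)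
    obtain ⟨g, hg⟩ := hd
    rw [Function.iterate_succ_apply', rk_ibp, ih _ (by omega), Function.iterate_succ_apply, pow_succ]
    · ring
    · rw [hg]; simp
    · rw [hg]; simp

open Polynomial in
lemma rk_beta_s14 (a b : ℕ) :
    ∫ s in (0:ℝ)..1, s ^ a * (1 - s) ^ b
      = (a.factorial * b.factorial : ℝ) / ((a + b + 1).factorial : ℝ) := by
  induction b generalizing a with
  | zero =>
    simp [Nat.factorial_succ]
    field_simp
  | succ b ih =>
    have h := rk_ibp ((1 - X) ^ (b + 1)) (X ^ (a + 1)) (by simp) (by simp)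
    simp [derivative_pow] at h
    have e1 : ∀ s : ℝ, (1 - s) ^ (b + 1) * ((a + 1) * s ^ a)
        = (a + 1) * (s ^ a * (1 - s) ^ (b + 1)) := fun s => by ring
    have e2 : ∀ s : ℝ, (b + 1) * (1 - s) ^ b * s ^ (a + 1)
        = (b + 1) * (s ^ (a + 1) * (1 - s) ^ b) := fun s => by ring
    simp only [e1, e2, intervalIntegral.integral_const_mul, ih] at h
    have ha : (a + 1 : ℝ) ≠ 0 := by positivity
    rw [show a + (b + 1) + 1 = a + 1 + b + 1 by ring]
    apply mul_left_cancel₀ ha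
    rw [h, Nat.factorial_succ a, Nat.factorial_succ b]
    push_cast
    ring

noncomputable def rkH (p : ℕ) : ℝ :=
  (p.factorial : ℝ) ^ 4 / ((2 * p).factorial * (2 * p + 1).factorial)

open Polynomial in
lemma rk_legendre (p : ℕ) : ∃ P : ℝ[X],
    (∀ k < p, ∫ s in (0:ℝ)..1, s ^ k * P.eval s = 0) ∧
    (∫ s in (0:ℝ)..1, s ^ p * P.eval s = rkH p) ∧
    (∫ s in (0:ℝ)..1, P.eval s * P.eval s = rkH p) := by
  set W : ℝ[X] := (X * (X - 1) : ℝ[X]) ^ p with hW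
  have hmon : (X * (X - 1) : ℝ[X]).Monic := by
    have := monic_X_sub_C (1:ℝ)
    simpa using monic_X.mul this
  have hdeg1 : (X * (X - 1) : ℝ[X]).natDegree = 2 := by
    have := natDegree_X_sub_C (1:ℝ)
    rw [C_1] at this
    have h2 := monic_X_sub_C (1:ℝ)
    rw [C_1] at h2
    rw [Monic.natDegree_mul monic_X h2, this]; simp
  have hWm : W.Monic := hmon.pow p
  have hWd : W.natDegree = 2 * p := by rw [hW, hmon.natDegree_pow, hdeg1]; ring
  set D := derivative^[p] W with hD
  have hDd : D.natDegree < p + 1 := by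
    have := natDegree_iterate_derivative W p
    rw [hWd, ← hD] at this; omega
  have hDc : D.coeff p = ((2 * p).factorial : ℝ) / p.factorial := by
    rw [hD, coeff_iterate_derivative]
    have : W.coeff (p + p) = 1 := by
      have := hWm.coeff_natDegree
      rwa [hWd, two_mul] at this
    rw [this, ← two_mul]
    have h3 := Nat.factorial_mul_descFactorial (show p ≤ 2 * p by omega)
    rw [show 2 * p - p = p by omega] at h3
    rw [← h3]; push_cast
    have := Nat.factorial_pos p
    field_simp
    simp
  have hmom : ∀ k ≤ p, ∫ s in (0:ℝ)..1, s ^ k * D.eval s =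
      if k = p then (p.factorial : ℝ) ^ 3 / (2 * p + 1).factorial else 0 := by
    intro k hk
    have h := rk_ibp_iter p (X ^ k) p le_rfl
    simp only [eval_pow, eval_X, ← hW, ← hD] at h
    rw [h]
    split_ifs with hkp
    · subst hkp
      rw [iterate_derivative_X_pow_eq_smul]
      simp only [Nat.descFactorial_self, Nat.sub_self, pow_zero]
      have e : ∀ s : ℝ, eval s ((k.factorial : ℝ) • (1 : ℝ[X])) * (s * (s - 1)) ^ k
          = ((-1) ^ k * k.factorial) * (s ^ k * (1 - s) ^ k) := fun s => by
        have e3 : (s * (s - 1)) ^ k = (-1) ^ k * (s ^ k * (1 - s) ^ k) := by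
          rw [← mul_pow, ← mul_pow]; congr 1; ring
        rw [e3]; simp; ring
      simp only [e, intervalIntegral.integral_const_mul, rk_beta_s14]
      rw [← two_mul, ← mul_assoc, ← mul_assoc, ← pow_add, ← two_mul, pow_mul]
      simp; ring
    · rw [iterate_derivative_eq_zero (by simp; omega)]
      simp
  have hsq : ∫ s in (0:ℝ)..1, D.eval s * D.eval s
      = D.coeff p * ((p.factorial : ℝ) ^ 3 / (2 * p + 1).factorial) := by
    have e : ∀ s : ℝ, D.eval s * D.eval s
        = ∑ k ∈ Finset.range (p + 1), D.coeff k * (s ^ k * D.eval s) := fun s => by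
      conv_lhs => rw [eval_eq_sum_range' hDd, Finset.sum_mul]
      rw [← eval_eq_sum_range' hDd]
      exact Finset.sum_congr rfl fun k _ => by ring
    simp only [e]
    rw [intervalIntegral.integral_finsetSum]
    · simp only [intervalIntegral.integral_const_mul]
      rw [Finset.sum_range_succ, hmom p le_rfl, Finset.sum_eq_zero]
      · simp
      · intro k hk
        rw [Finset.mem_range] at hk
        rw [hmom k hk.le, if_neg hk.ne, mul_zero]
    · intro k _
      apply Continuous.intervalIntegrable
      have := D.continuous
      fun_prop
  have hp := Nat.factorial_pos p
  have h2p := Nat.factorial_pos (2 * p)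
  have hc : (p.factorial : ℝ) / (2 * p).factorial ≠ 0 := by positivity
  refine ⟨C ((p.factorial : ℝ) / (2 * p).factorial) * D, ?_, ?_, ?_⟩
  · intro k hk
    have e : ∀ s c : ℝ, s ^ k * (C c * D).eval s = c * (s ^ k * D.eval s) := fun s c => by
      simp; ring
    simp only [e, intervalIntegral.integral_const_mul]
    rw [hmom k hk.le, if_neg hk.ne, mul_zero]
  · have e : ∀ s c : ℝ, s ^ p * (C c * D).eval s = c * (s ^ p * D.eval s) := fun s c => by
      simp; ring
    simp only [e, intervalIntegral.integral_const_mul]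
    rw [hmom p le_rfl, if_pos rfl, rkH]
    field_simp
  · have e : ∀ s c : ℝ, (C c * D).eval s * (C c * D).eval s = c ^ 2 * (D.eval s * D.eval s) :=
      fun s c => by simp; ring
    simp only [e, intervalIntegral.integral_const_mul]
    rw [hsq, hDc, rkH]
    field_simp

lemma rkH_pos (p : ℕ) : 0 < rkH p := by
  have hp := Nat.factorial_pos p
  have h2p := Nat.factorial_pos (2 * p)
  have h3p := Nat.factorial_pos (2 * p + 1)
  unfold rkH; positivity

section
variable {V : Type*} [AddCommGroup V] [Module ℝ V]

lemma rk_cont (B : V →ₗ[ℝ] V →ₗ[ℝ] ℝ) (p q : ℕ) (x y : ℕ → V) :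
    Continuous fun s : ℝ => B (∑ k ∈ Finset.range p, s ^ k • x k)
      (∑ k ∈ Finset.range q, s ^ k • y k) := by
  simp only [map_sum, LinearMap.sum_apply, map_smul, LinearMap.smul_apply, smul_eq_mul]
  fun_prop

lemma rk_top (B : V →ₗ[ℝ] V →ₗ[ℝ] ℝ) (hs : ∀ x y, B x y = B y x) (hp : ∀ x, 0 ≤ B x x)
    (p : ℕ) (x : ℕ → V) :
    rkH p * B (x p) (x p) ≤ ∫ s in (0:ℝ)..1, B (∑ k ∈ Finset.range (p + 1), s ^ k • x k)
      (∑ k ∈ Finset.range (p + 1), s ^ k • x k) := by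
  obtain ⟨P, h0, h1, h2⟩ := rk_legendre p
  set q : ℝ → V := fun s => ∑ k ∈ Finset.range (p + 1), s ^ k • x k with hq
  have hPc := P.continuous
  have e1 : ∀ s, B (q s - P.eval s • x p) (q s - P.eval s • x p)
      = B (q s) (q s) - 2 * (P.eval s * B (q s) (x p))
        + (P.eval s * P.eval s) * B (x p) (x p) := fun s => by
    simp only [map_sub, LinearMap.sub_apply, map_smul, LinearMap.smul_apply, smul_eq_mul,
      hs (x p) (q s)]
    ring
  have e2 : ∀ s, P.eval s * B (q s) (x p)
      = ∑ k ∈ Finset.range (p + 1), B (x k) (x p) * (s ^ k * P.eval s) := fun s => by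
    simp only [hq, map_sum, LinearMap.sum_apply, map_smul, LinearMap.smul_apply, smul_eq_mul,
      Finset.mul_sum]
    exact Finset.sum_congr rfl fun k _ => by ring
  have hqq : Continuous fun s => B (q s) (q s) := rk_cont B (p + 1) (p + 1) x x
  have h3 : ∫ s in (0:ℝ)..1, P.eval s * B (q s) (x p) = B (x p) (x p) * rkH p := by
    simp only [e2]
    rw [intervalIntegral.integral_finsetSum]
    · simp only [intervalIntegral.integral_const_mul]
      rw [Finset.sum_range_succ, h1, Finset.sum_eq_zero]
      · simp
      · intro k hk
        rw [h0 k (Finset.mem_range.1 hk), mul_zero]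
    · intro k _
      apply Continuous.intervalIntegrable
      fun_prop
  have hc2 : Continuous fun s => P.eval s * B (q s) (x p) := by
    simp only [e2]; fun_prop
  have hnn : 0 ≤ ∫ s in (0:ℝ)..1, B (q s - P.eval s • x p) (q s - P.eval s • x p) :=
    intervalIntegral.integral_nonneg (by norm_num) fun s _ => hp _
  simp only [e1] at hnn
  rw [intervalIntegral.integral_add, intervalIntegral.integral_sub,
    intervalIntegral.integral_const_mul, intervalIntegral.integral_mul_const, h3, h2] at hnn
  · linarith
  · exact hqq.intervalIntegrable _ _
  · exact (hc2.const_mul 2).intervalIntegrable _ _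
  · exact (hqq.sub (hc2.const_mul 2)).intervalIntegrable _ _
  · apply Continuous.intervalIntegrable
    fun_prop

end

lemma rk_coercive (p : ℕ) : ∃ δ > (0:ℝ), ∀ (V : Type) [AddCommGroup V] [Module ℝ V]
    (B : V →ₗ[ℝ] V →ₗ[ℝ] ℝ) (_ : ∀ x y, B x y = B y x) (_ : ∀ x, 0 ≤ B x x) (x : ℕ → V),
    δ * ∑ k ∈ Finset.range (p + 1), B (x k) (x k) ≤
      ∫ s in (0:ℝ)..1, B (∑ k ∈ Finset.range (p + 1), s ^ k • x k)
      (∑ k ∈ Finset.range (p + 1), s ^ k • x k) := by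
  induction p with
  | zero =>
    refine ⟨rkH 0, rkH_pos 0, fun V _ _ B hs hp x => ?_⟩
    have := rk_top B hs hp 0 x
    simpa using this
  | succ p ih =>
    obtain ⟨δ, hδ, ih⟩ := ih
    have hH := rkH_pos (p + 1)
    set h := rkH (p + 1) with hh
    refine ⟨min (δ / (4 + 4 / h)) (h / 2), by positivity, fun V _ _ B hs hp x => ?_⟩
    have t := rk_top B hs hp (p + 1) x
    have i := ih V B hs hp x
    set I := ∫ s in (0:ℝ)..1, B (∑ k ∈ Finset.range (p + 1 + 1), s ^ k • x k)
      (∑ k ∈ Finset.range (p + 1 + 1), s ^ k • x k) with hI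
    set I' := ∫ s in (0:ℝ)..1, B (∑ k ∈ Finset.range (p + 1), s ^ k • x k)
      (∑ k ∈ Finset.range (p + 1), s ^ k • x k) with hI'
    have hle : I' ≤ 2 * I + 2 * B (x (p + 1)) (x (p + 1)) := by
      have : I' ≤ ∫ s in (0:ℝ)..1, (2 * B (∑ k ∈ Finset.range (p + 1 + 1), s ^ k • x k)
          (∑ k ∈ Finset.range (p + 1 + 1), s ^ k • x k) + 2 * B (x (p + 1)) (x (p + 1))) := by
        apply intervalIntegral.integral_mono_on (by norm_num)
        · exact (rk_cont B _ _ x x).intervalIntegrable _ _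
        · exact (((rk_cont B _ _ x x).const_mul 2).add continuous_const).intervalIntegrable _ _
        · intro s hs1
          rw [Finset.sum_range_succ _ (p + 1)]
          set a := ∑ k ∈ Finset.range (p + 1), s ^ k • x k
          set b := x (p + 1)
          have h1 := hp (a + (2 * s ^ (p + 1)) • b)
          simp only [map_add, LinearMap.add_apply, map_smul, LinearMap.smul_apply, smul_eq_mul,
            hs b a] at h1 ⊢
          have h2 : s ^ (p + 1) * s ^ (p + 1) ≤ 1 := by
            have := pow_le_one₀ (n := p + 1) hs1.1 hs1.2
            have h0 := pow_nonneg hs1.1 (p + 1)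
            nlinarith
          have := hp b
          nlinarith [mul_le_mul_of_nonneg_right h2 this]
      rw [intervalIntegral.integral_add, intervalIntegral.integral_const_mul] at this
      · rw [← hI, intervalIntegral.integral_const] at this
        simp only [sub_zero, one_smul] at this
        exact this
      · exact ((rk_cont B _ _ x x).const_mul 2).intervalIntegrable _ _
      · exact continuous_const.intervalIntegrable _ _
    rw [Finset.sum_range_succ]
    set b := B (x (p + 1)) (x (p + 1))
    have hb : 0 ≤ b := hp _
    have hI0 : 0 ≤ I := le_trans (by positivity) t
    have hS : 0 ≤ ∑ k ∈ Finset.range (p + 1), B (x k) (x k) := Finset.sum_nonneg fun k _ => hp _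
    set S := ∑ k ∈ Finset.range (p + 1), B (x k) (x k)
    have hb2 : b ≤ I / h := by rw [le_div_iff₀ hH]; linarith
    have h3 : δ / (4 + 4 / h) * S ≤ I / 2 := by
      rw [div_mul_eq_mul_div, div_le_iff₀ (by positivity)]
      have : I / 2 * (4 + 4 / h) = 2 * I + 2 * (I / h) := by field_simp; ring
      rw [this]; linarith
    have h4 := mul_le_mul_of_nonneg_right (min_le_left (δ / (4 + 4 / h)) (h / 2)) hS
    have h5 := mul_le_mul_of_nonneg_right (min_le_right (δ / (4 + 4 / h)) (h / 2)) hb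
    linarith

section
variable {𝔸 : Type*} [NormedRing 𝔸]

lemma rk_pow_norm (h1 : ‖(1:𝔸)‖ ≤ 1) (x : 𝔸) (n : ℕ) : ‖x ^ n‖ ≤ ‖x‖ ^ n := by
  induction n with
  | zero => simpa using h1
  | succ n ih =>
    rw [pow_succ, pow_succ]
    exact (norm_mul_le _ _).trans (mul_le_mul_of_nonneg_right ih (norm_nonneg _))

lemma rk_exp_rem [NormedAlgebra ℝ 𝔸] [CompleteSpace 𝔸] (h1 : ‖(1:𝔸)‖ ≤ 1) (x : 𝔸) (n : ℕ) :
    ∃ Φ : 𝔸, NormedSpace.exp x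
      = ∑ k ∈ Finset.range n, (1 / (k.factorial : ℝ)) • x ^ k + Φ * x ^ n
      ∧ ‖Φ‖ ≤ Real.exp ‖x‖ := by
  have hb : ∀ i : ℕ, ‖((1 / ((i + n).factorial : ℝ)) • x ^ i : 𝔸)‖ ≤ ‖x‖ ^ i / i.factorial := by
    intro i
    rw [norm_smul, Real.norm_of_nonneg (by positivity), div_eq_mul_one_div (‖x‖ ^ i),
      mul_comm]
    apply mul_le_mul (rk_pow_norm h1 x i) _ (by positivity) (by positivity)
    apply one_div_le_one_div_of_le (by positivity)
    exact_mod_cast Nat.factorial_le (by omega)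
  have hsr : HasSum (fun i : ℕ => ‖x‖ ^ i / i.factorial) (Real.exp ‖x‖) := by
    rw [Real.exp_eq_exp_ℝ]
    exact NormedSpace.expSeries_div_hasSum_exp ‖x‖
  have hs : Summable (fun i : ℕ => ((1 / ((i + n).factorial : ℝ)) • x ^ i : 𝔸)) :=
    Summable.of_norm_bounded hsr.summable hb
  refine ⟨∑' i : ℕ, (1 / ((i + n).factorial : ℝ)) • x ^ i, ?_, ?_⟩
  · have h2 := NormedSpace.exp_series_hasSum_exp' (𝕂 := ℝ) x
    have h3 := h2.summable.sum_add_tsum_nat_add n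
    rw [h2.tsum_eq] at h3
    rw [← h3, ← hs.tsum_mul_right]
    simp only [one_div, pow_add, smul_mul_assoc]
  · exact tsum_of_norm_bounded hsr hb
end

section
variable {𝔸 : Type*} [NormedCommRing 𝔸]

lemma rk_na {x y : 𝔸} {a b : ℝ} (hx : ‖x‖ ≤ a) (hy : ‖y‖ ≤ b) : ‖x + y‖ ≤ a + b :=
  (norm_add_le _ _).trans (add_le_add hx hy)
lemma rk_ns {x y : 𝔸} {a b : ℝ} (hx : ‖x‖ ≤ a) (hy : ‖y‖ ≤ b) : ‖x - y‖ ≤ a + b :=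
  (norm_sub_le _ _).trans (add_le_add hx hy)
lemma rk_nm {x y : 𝔸} {a b : ℝ} (hx : ‖x‖ ≤ a) (hy : ‖y‖ ≤ b) : ‖x * y‖ ≤ a * b :=
  (norm_mul_le _ _).trans (mul_le_mul hx hy (norm_nonneg _) ((norm_nonneg _).trans hx))

lemma rk_alg [NormedAlgebra ℝ 𝔸] [CompleteSpace 𝔸] (h1 : ‖(1:𝔸)‖ ≤ 1) (a : 𝔸) (ha : ‖a‖ ≤ 1) (r : ℕ) (hr : 1 ≤ r)
    (m : ℕ) (hm : m = 2 ∨ m = 3) :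
    ∃ G : 𝔸, ‖G‖ ≤ 25000 ∧
      (∑ i ∈ Finset.range (r + 1), (1 / (i.factorial : ℝ)) • a ^ i) ^ m
      = NormedSpace.exp ((m : ℝ) • a) * (1 - ((m : ℝ) / (r + 1).factorial) • a ^ (r + 1)
        + ((m : ℝ) * (1 / (r + 1).factorial - 1 / (r + 2).factorial)) • a ^ (r + 2)
        + G * a ^ (r + 3)) := by
  let : NormedAlgebra ℚ 𝔸 := NormedAlgebra.restrictScalars ℚ ℝ 𝔸
  have he3 : Real.exp 1 ≤ 3 := Real.exp_one_lt_three.le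
  obtain ⟨Φ, hΦ, hΦn⟩ := rk_exp_rem h1 a (r + 3)
  obtain ⟨Ψ, hΨ, hΨn⟩ := rk_exp_rem h1 (-a) 2
  replace hΦn : ‖Φ‖ ≤ 3 := hΦn.trans ((Real.exp_le_exp.2 ha).trans he3)
  replace hΨn : ‖Ψ‖ ≤ 3 := by
    rw [norm_neg] at hΨn
    exact hΨn.trans ((Real.exp_le_exp.2 ha).trans he3)
  have hC : ∀ n : ℕ, ‖algebraMap ℝ 𝔸 (1 / (n.factorial : ℝ))‖ ≤ 1 := by
    intro n
    rw [norm_algebraMap, Real.norm_of_nonneg (by positivity)]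
    have : (1 : ℝ) ≤ n.factorial := by exact_mod_cast Nat.factorial_pos n
    have h2 : (1 : ℝ) / n.factorial ≤ 1 := by
      rw [div_le_one (by positivity)]; exact this
    calc _ ≤ (1:ℝ) * 1 := mul_le_mul h2 h1 (norm_nonneg _) zero_le_one
      _ = 1 := by norm_num
  have hC1 := hC (r + 1)
  have hC2 := hC (r + 2)
  set C1 := algebraMap ℝ 𝔸 (1 / ((r + 1).factorial : ℝ)) with hC1d
  set C2 := algebraMap ℝ 𝔸 (1 / ((r + 2).factorial : ℝ)) with hC2d
  set R := ∑ i ∈ Finset.range (r + 1), (1 / (i.factorial : ℝ)) • a ^ i with hR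
  rw [Finset.sum_range_succ, Finset.sum_range_succ, ← hR, Algebra.smul_def, Algebra.smul_def,
    ← hC1d, ← hC2d] at hΦ
  simp [Finset.sum_range_succ] at hΨ
  have hee : NormedSpace.exp a * NormedSpace.exp (-a) = 1 := by
    rw [← NormedSpace.exp_add_of_commute (Commute.neg_right (Commute.refl a))]
    simp
  set G1 := Φ - C2 + C1 * Ψ + a * (C2 * Ψ - Φ) + a * a * (Ψ * Φ) with hG1
  have hG1n : ‖G1‖ ≤ 25 := by
    refine (rk_na (rk_na (rk_na (rk_ns hΦn hC2) (rk_nm hC1 hΨn))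
      (rk_nm ha (rk_ns (rk_nm hC2 hΨn) hΦn))) (rk_nm (rk_nm ha ha) (rk_nm hΨn hΦn))).trans ?_
    norm_num
  set H := C1 + (C2 - C1) * a + G1 * (a * a) with hH
  have hHn : ‖H‖ ≤ 28 := by
    refine (rk_na (rk_na hC1 (rk_nm (rk_ns hC2 hC1) ha)) (rk_nm hG1n (rk_nm ha ha))).trans ?_
    norm_num
  have hRe : R = NormedSpace.exp a * (1 - H * a ^ (r + 1)) := by
    have e1 : R = NormedSpace.exp a * (1 - NormedSpace.exp (-a) * (NormedSpace.exp a - R)) := by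
      linear_combination (NormedSpace.exp a - R) * hee
    have e2 : NormedSpace.exp (-a) * (NormedSpace.exp a - R) = H * a ^ (r + 1) := by
      rw [hΨ, hΦ, hH, hG1]; ring
    rw [e2] at e1
    exact e1
  have hexp : NormedSpace.exp ((m : ℝ) • a) = NormedSpace.exp a ^ m := by
    rw [← NormedSpace.exp_nsmul, Nat.cast_smul_eq_nsmul]
  have hs1 : ((m : ℝ) / (r + 1).factorial) • a ^ (r + 1) = (m : 𝔸) * C1 * a ^ (r + 1) := by
    rw [Algebra.smul_def, div_eq_mul_one_div, map_mul, ← hC1d, map_natCast]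
  have hs2 : ((m : ℝ) * (1 / (r + 1).factorial - 1 / (r + 2).factorial)) • a ^ (r + 2)
      = (m : 𝔸) * (C1 - C2) * a ^ (r + 2) := by
    rw [Algebra.smul_def, map_mul, map_sub, ← hC1d, ← hC2d, map_natCast]
  rw [hexp, hs1, hs2, hRe, mul_pow]
  obtain ⟨q, rfl⟩ : ∃ q, r = q + 1 := ⟨r - 1, by omega⟩
  have hq : ∀ n, ‖a ^ n‖ ≤ 1 := fun n =>
    (rk_pow_norm h1 a n).trans (pow_le_one₀ (norm_nonneg _) ha)
  rcases hm with rfl | rfl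
  · refine ⟨H * H * a ^ q - (G1 + G1), ?_, ?_⟩
    · refine (rk_ns (rk_nm (rk_nm hHn hHn) (hq q)) (rk_na hG1n hG1n)).trans ?_
      norm_num
    · congr 1
      have : (1 - H * a ^ (q + 1 + 1)) ^ 2
        = 1 - 2 * (H * a ^ (q + 1 + 1)) + H * H * a ^ q * a ^ (q + 1 + 3) := by ring
      rw [this]
      push_cast
      rw [show 2 * (H * a ^ (q + 1 + 1)) = 2 * ((C1 + (C2 - C1) * a + G1 * (a * a)) *
        a ^ (q + 1 + 1)) by rw [← hH]]
      ring
  · refine ⟨H * H * a ^ q + H * H * a ^ q + H * H * a ^ q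
        - H * H * H * a ^ (q + q + 2) - (G1 + G1 + G1), ?_, ?_⟩
    · have hx := rk_nm (rk_nm hHn hHn) (hq q)
      refine (rk_ns (rk_ns (rk_na (rk_na hx hx) hx)
        (rk_nm (rk_nm (rk_nm hHn hHn) hHn) (hq _))) (rk_na (rk_na hG1n hG1n) hG1n)).trans ?_
      norm_num
    · congr 1
      have : (1 - H * a ^ (q + 1 + 1)) ^ 3
        = 1 - 3 * (H * a ^ (q + 1 + 1)) + 3 * (H * H * a ^ q * a ^ (q + 1 + 3))
          - H * H * H * a ^ (q + q + 2) * a ^ (q + 1 + 3) := by ring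
      rw [this]
      push_cast
      rw [show 3 * (H * a ^ (q + 1 + 1)) = 3 * ((C1 + (C2 - C1) * a + G1 * (a * a)) *
        a ^ (q + 1 + 1)) by rw [← hH]]
      ring
end

lemma rk_alg_op (V : Type) [NormedAddCommGroup V] [InnerProductSpace ℝ V] [FiniteDimensional ℝ V]
    (A : V →L[ℝ] V) (ha : ‖A‖ ≤ 1) (r : ℕ) (hr : 1 ≤ r)
    (m : ℕ) (hm : m = 2 ∨ m = 3) :
    ∃ G : V →L[ℝ] V, Commute A G ∧ ‖G‖ ≤ 25000 ∧
      (∑ i ∈ Finset.range (r + 1), (1 / (i.factorial : ℝ)) • A ^ i) ^ m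
      = NormedSpace.exp ((m : ℝ) • A) * (1 - ((m : ℝ) / (r + 1).factorial) • A ^ (r + 1)
        + ((m : ℝ) * (1 / (r + 1).factorial - 1 / (r + 2).factorial)) • A ^ (r + 2)
        + G * A ^ (r + 3)) := by
  have : CompleteSpace V := FiniteDimensional.complete ℝ V
  let i1 : NormedRing (Algebra.elemental ℝ A) := inferInstance
  let i2 : NormedCommRing (Algebra.elemental ℝ A) :=
    { i1 with mul_comm := fun x y => mul_comm x y }
  let a : Algebra.elemental ℝ A := ⟨A, Algebra.elemental.self_mem ℝ A⟩
  obtain ⟨G, hG, h⟩ := rk_alg (𝔸 := Algebra.elemental ℝ A)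
    (ContinuousLinearMap.norm_id_le (𝕜 := ℝ) (E := V)) a ha r hr m hm
  let : NormedAlgebra ℚ (V →L[ℝ] V) := NormedAlgebra.restrictScalars ℚ ℝ _
  let : NormedAlgebra ℚ (Algebra.elemental ℝ A) := NormedAlgebra.restrictScalars ℚ ℝ _
  refine ⟨G, ?_, hG, ?_⟩
  · exact congrArg Subtype.val (mul_comm a G)
  · have h2 := congrArg (Algebra.elemental ℝ A).val h
    have he := NormedSpace.map_exp (Algebra.elemental ℝ A).val continuous_subtype_val ((m:ℝ) • a)
    simp only [map_mul, map_add, map_sub, map_one, map_pow, map_sum, map_smul, he] at h2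
    exact h2

section
variable {V : Type} [NormedAddCommGroup V] [InnerProductSpace ℝ V]

noncomputable def rkB (A : V →L[ℝ] V) : V →ₗ[ℝ] V →ₗ[ℝ] ℝ :=
  LinearMap.mk₂ ℝ (fun x y => -(⟪A x, y⟫ + ⟪x, A y⟫))
    (fun x x' y => by simp only [map_add, inner_add_left]; ring)
    (fun c x y => by
      simp only [map_smul, real_inner_smul_left, smul_eq_mul]; ring)
    (fun x y y' => by simp only [map_add, inner_add_right]; ring)
    (fun c x y => by
      simp only [map_smul, real_inner_smul_right, smul_eq_mul]; ring)

lemma rkB_apply (A : V →L[ℝ] V) (x y : V) : rkB A x y = -(⟪A x, y⟫ + ⟪x, A y⟫) := rfl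

lemma rkB_symm (A : V →L[ℝ] V) (x y : V) : rkB A x y = rkB A y x := by
  rw [rkB_apply, rkB_apply, real_inner_comm, real_inner_comm (A y) x]; ring

lemma rkB_self (A : V →L[ℝ] V) (x : V) : rkB A x x = -2 * ⟪x, A x⟫ := by
  rw [rkB_apply, real_inner_comm]; ring

variable {A : V →L[ℝ] V}

lemma rkB_pos (hA : ∀ v, ⟪A v, v⟫ ≤ 0) (x : V) : 0 ≤ rkB A x x := by
  rw [rkB_self, real_inner_comm]; linarith [hA x]

lemma rkB_cs (hA : ∀ v, ⟪A v, v⟫ ≤ 0) (x y : V) : |rkB A x y| ≤ √(rkB A x x) * √(rkB A y y) := by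
  rw [← Real.sqrt_mul (rkB_pos hA x)]
  apply Real.abs_le_sqrt
  have := LinearMap.BilinForm.apply_mul_apply_le_of_forall_zero_le (rkB A) (rkB_pos hA) x y
  rw [rkB_symm A y x] at this
  rw [sq]; exact this

lemma rkB_bound (x : V) : √(rkB A x x) ≤ √(2 * ‖A‖) * ‖x‖ := by
  rw [show √(2 * ‖A‖) * ‖x‖ = √(2 * ‖A‖ * ‖x‖ ^ 2) by
    rw [Real.sqrt_mul (x := 2 * ‖A‖) (by positivity), Real.sqrt_sq (norm_nonneg _)]]
  apply Real.sqrt_le_sqrt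
  rw [rkB_self]
  have h1 := abs_real_inner_le_norm x (A x)
  have h2 := A.le_opNorm x
  have h3 := neg_abs_le ⟪x, A x⟫
  nlinarith [norm_nonneg x, mul_le_mul_of_nonneg_left h2 (norm_nonneg x)]

lemma rk_shift (hA : ∀ v, ⟪A v, v⟫ ≤ 0) (n : ℕ) (u y : V) (M : ℝ) (hM : ∀ i, √(rkB A ((A ^ i) y) ((A ^ i) y)) ≤ M) :
    |⟪u, (A ^ n) y⟫ - (-1) ^ n * ⟪(A ^ n) u, y⟫|
      ≤ (∑ j ∈ Finset.range n, √(rkB A ((A ^ j) u) ((A ^ j) u))) * M := by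
  induction n generalizing u with
  | zero => simp
  | succ n ih =>
    have h := ih (A u)
    rw [Finset.sum_range_succ', add_mul]
    have e : ∀ j (z : V), (A ^ (j + 1)) z = (A ^ j) (A z) := fun j z => by
      rw [pow_succ]; rfl
    have e' : ∀ j (z : V), (A ^ (j + 1)) z = A ((A ^ j) z) := fun j z => by
      rw [pow_succ']; rfl
    have h1 : ⟪u, (A ^ (n + 1)) y⟫ - (-1) ^ (n + 1) * ⟪(A ^ (n + 1)) u, y⟫
        = -(⟪A u, (A ^ n) y⟫ - (-1) ^ n * ⟪(A ^ n) (A u), y⟫) - rkB A u ((A ^ n) y) := by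
      rw [rkB_apply, e n u, e' n y]; ring
    have h2 := rkB_cs hA u ((A ^ n) y)
    have h3 := mul_le_mul_of_nonneg_left (hM n) (Real.sqrt_nonneg (rkB A u u))
    rw [h1]
    refine (abs_sub _ _).trans ?_
    rw [abs_neg]
    simp only [e, pow_zero, one_apply_eq_self]
    linarith

/-- initial data perturbation -/
lemma rk_c1 (hA : ∀ v, ⟪A v, v⟫ ≤ 0) (p : ℕ) (hp : Even p) (hp1 : 1 ≤ p) (α β K : ℝ) (hα : 0 ≤ α) (hβ : 0 ≤ β)
    (hK : 0 ≤ K) (hA1 : ‖A‖ ≤ 1)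
    (G : V →L[ℝ] V) (hG : Commute A G) (hGK : ‖G‖ ≤ K) (u : V) (d : V)
    (hd : d = -(α • (A ^ (2 * p + 1)) u) + β • (A ^ (2 * p + 2)) u + G ((A ^ (2 * p + 3)) u)) :
    ‖d‖ ≤ (α + β + K) * (‖A‖ * ‖(A ^ (p + 1)) u‖) ∧
    ‖u + d‖ ^ 2 ≤ ‖u‖ ^ 2 + α * rkB A ((A ^ p) u) ((A ^ p) u) - 2 * β * ‖(A ^ (p + 1)) u‖ ^ 2
      + 2 * (α + β + K) * (∑ j ∈ Finset.range (p + 1), √(rkB A ((A ^ j) u) ((A ^ j) u)))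
        * (√(2 * ‖A‖) * ‖(A ^ (p + 1)) u‖)
      + (2 * K + (α + β + K) ^ 2) * ‖A‖ * ‖(A ^ (p + 1)) u‖ ^ 2 := by
  set z := (A ^ (p + 1)) u with hz
  set Sg := ∑ j ∈ Finset.range (p + 1), √(rkB A ((A ^ j) u) ((A ^ j) u)) with hSg
  have hcomp : ∀ i j (x : V), (A ^ (i + j)) x = (A ^ i) ((A ^ j) x) := fun i j x => by
    rw [pow_add]; rfl
  have hA' : ∀ x, ‖A x‖ ≤ ‖x‖ := fun x => by
    have := A.le_opNorm x
    nlinarith [norm_nonneg x]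
  have hpow : ∀ i (x : V), ‖(A ^ i) x‖ ≤ ‖x‖ := fun i => by
    induction i with
    | zero => intro x; simp
    | succ i ih => intro x; rw [hcomp, pow_one]; exact (ih _).trans (hA' x)
  have hpow' : ∀ i, 1 ≤ i → ∀ (x : V), ‖(A ^ i) x‖ ≤ ‖A‖ * ‖x‖ := fun i hi x => by
    obtain ⟨j, rfl⟩ : ∃ j, i = j + 1 := ⟨i - 1, by omega⟩
    rw [hcomp, pow_one]; exact (hpow _ _).trans (A.le_opNorm x)
  have hGn : ∀ x, ‖G x‖ ≤ K * ‖x‖ := fun x =>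
    (G.le_opNorm x).trans (mul_le_mul_of_nonneg_right hGK (norm_nonneg _))
  have hdn : ‖d‖ ≤ (α + β + K) * (‖A‖ * ‖z‖) := by
    have a1 : ‖(A ^ (2 * p + 1)) u‖ ≤ ‖A‖ * ‖z‖ := by
      rw [show 2 * p + 1 = p + (p + 1) by ring, hcomp]; exact hpow' _ hp1 _
    have a2 : ‖(A ^ (2 * p + 2)) u‖ ≤ ‖A‖ * ‖z‖ := by
      rw [show 2 * p + 2 = (p + 1) + (p + 1) by ring, hcomp]; exact hpow' _ (by omega) _
    have a3 : ‖(A ^ (2 * p + 3)) u‖ ≤ ‖A‖ * ‖z‖ := by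
      rw [show 2 * p + 3 = (p + 2) + (p + 1) by ring, hcomp]; exact hpow' _ (by omega) _
    rw [hd]
    refine (norm_add₃_le).trans ?_
    rw [norm_neg, norm_smul, norm_smul, Real.norm_of_nonneg hα, Real.norm_of_nonneg hβ]
    have a4 := hGn ((A ^ (2 * p + 3)) u)
    have b1 := mul_le_mul_of_nonneg_left a1 hα
    have b2 := mul_le_mul_of_nonneg_left a2 hβ
    have b3 := mul_le_mul_of_nonneg_left a3 hK
    linarith
  refine ⟨hdn, ?_⟩
  have hE0 : 0 ≤ √(2 * ‖A‖) * ‖z‖ := by positivity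
  set E := √(2 * ‖A‖) * ‖z‖ with hE
  have hsE : ∀ x : V, ∀ c, ‖x‖ ≤ c * ‖z‖ → √(rkB A x x) ≤ c * E := fun x c hx => by
    refine (rkB_bound x).trans ?_
    have := mul_le_mul_of_nonneg_left hx (Real.sqrt_nonneg (2 * ‖A‖))
    rw [hE]; linarith
  have hzi : ∀ i, √(rkB A ((A ^ i) z) ((A ^ i) z)) ≤ E := fun i => by
    have := hsE ((A ^ i) z) 1 (by rw [one_mul]; exact hpow i z)
    rwa [one_mul] at this
  have hSmono : ∑ j ∈ Finset.range p, √(rkB A ((A ^ j) u) ((A ^ j) u)) ≤ Sg := by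
    rw [hSg, Finset.sum_range_succ]
    linarith [Real.sqrt_nonneg (rkB A ((A ^ p) u) ((A ^ p) u))]
  have t1 := rk_shift hA p u z E hzi
  rw [hp.neg_one_pow, one_mul, ← hcomp, show p + (p + 1) = 2 * p + 1 by ring] at t1
  have t1' : ⟪(A ^ p) u, z⟫ = -(1 / 2) * rkB A ((A ^ p) u) ((A ^ p) u) := by
    rw [rkB_self, hz, add_comm p 1, hcomp, pow_one]; ring
  rw [t1'] at t1
  have t1'' := (abs_le.1 (t1.trans (mul_le_mul_of_nonneg_right hSmono hE0))).1
  have t2 := rk_shift hA (p + 1) u z E hzi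
  rw [hp.add_one.neg_one_pow, ← hcomp, show (p + 1) + (p + 1) = 2 * p + 2 by ring, ← hz,
    real_inner_self_eq_norm_sq] at t2
  have t2'' := (abs_le.1 t2).2
  set y := A (G z) with hy
  have hyn : ‖y‖ ≤ ‖A‖ * (K * ‖z‖) :=
    (A.le_opNorm _).trans (mul_le_mul_of_nonneg_left (hGn z) (norm_nonneg _))
  have hyn' : ‖y‖ ≤ K * ‖z‖ := (hA' _).trans (hGn z)
  have t3 := rk_shift hA (p + 1) u y (K * E) (fun i => hsE _ _ ((hpow i y).trans hyn'))
  have hy2 : (A ^ (p + 1)) y = G ((A ^ (2 * p + 3)) u) := by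
    have e1 : (A ^ (p + 1)) y = (A ^ (p + 2)) (G z) := by
      rw [hy, show p + 2 = (p + 1) + 1 by ring, hcomp (p + 1) 1, pow_one]
    have e2 : (A ^ (p + 2)) (G z) = G ((A ^ (p + 2)) z) := by
      have := (hG.pow_left (p + 2)).eq
      exact congrArg (fun f : V →L[ℝ] V => f z) this
    rw [e1, e2, hz, ← hcomp]; congr 3; ring
  rw [hy2, hp.add_one.neg_one_pow, ← hz] at t3
  have t3'' := (abs_le.1 t3).2
  have t4 := (abs_le.1 (abs_real_inner_le_norm z y)).1
  have t5 := mul_le_mul_of_nonneg_left hyn (norm_nonneg z)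
  have t6 : ‖d‖ ^ 2 ≤ (α + β + K) ^ 2 * ‖A‖ * ‖z‖ ^ 2 := by
    have h1 := pow_le_pow_left₀ (norm_nonneg d) hdn 2
    have h2 : ‖A‖ ^ 2 ≤ ‖A‖ := by nlinarith [norm_nonneg A]
    have h3 := mul_le_mul_of_nonneg_left h2 (show 0 ≤ (α + β + K) ^ 2 * ‖z‖ ^ 2 by positivity)
    nlinarith
  have hin : ⟪u, d⟫ = -(α * ⟪u, (A ^ (2 * p + 1)) u⟫) + β * ⟪u, (A ^ (2 * p + 2)) u⟫
      + ⟪u, G ((A ^ (2 * p + 3)) u)⟫ := by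
    rw [hd, inner_add_right, inner_add_right, inner_neg_right, real_inner_smul_right,
      real_inner_smul_right]
  rw [norm_add_sq_real, hin]
  have s1 := mul_le_mul_of_nonneg_left t1'' hα
  have s2 := mul_le_mul_of_nonneg_left t2'' hβ
  nlinarith

/-- flow part -/
lemma rk_flow [FiniteDimensional ℝ V] (m : ℝ) (v : V) :
    ‖NormedSpace.exp (m • A) v‖ ^ 2 = ‖v‖ ^ 2 - m * ∫ s in (0:ℝ)..1,
      rkB A (NormedSpace.exp (s • (m • A)) v) (NormedSpace.exp (s • (m • A)) v) ∧
    Continuous (fun s : ℝ => rkB A (NormedSpace.exp (s • (m • A)) v)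
      (NormedSpace.exp (s • (m • A)) v)) := by
  have : CompleteSpace V := FiniteDimensional.complete ℝ V
  set e : ℝ → V := fun s => NormedSpace.exp (s • (m • A)) v with he
  have hde : ∀ s, HasDerivAt e ((m • A) (e s)) s := fun s => by
    have := hasDerivAt_exp_smul_const' (𝕂 := ℝ) (m • A) s
    simpa using HasDerivAt.clm_apply this (hasDerivAt_const s v)
  have hce : Continuous e := continuous_iff_continuousAt.2 fun s => (hde s).continuousAt
  have hcB : Continuous fun s => rkB A (e s) (e s) := by
    simp only [rkB_apply]; fun_prop
  refine ⟨?_, hcB⟩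
  have hd : ∀ s, HasDerivAt (fun s => ‖e s‖ ^ 2) (-m * rkB A (e s) (e s)) s := fun s => by
    have := (hde s).norm_sq
    convert! this using 1
    rw [rkB_self]
    simp [real_inner_smul_right]
    ring
  have h := intervalIntegral.integral_eq_sub_of_hasDerivAt (a := 0) (b := 1) (fun s _ => hd s)
    ((hcB.const_mul (-m)).intervalIntegrable _ _)
  rw [intervalIntegral.integral_const_mul] at h
  have e1 : e 1 = NormedSpace.exp (m • A) v := by simp [he]
  have e0 : e 0 = v := by simp [he]
  rw [e1, e0] at h
  linarith
end

lemma rk_c2 {V : Type} [NormedAddCommGroup V] [InnerProductSpace ℝ V] [FiniteDimensional ℝ V]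
    {A : V →L[ℝ] V} (hA1 : ‖A‖ ≤ 1) (p : ℕ) (m : ℝ) (hm : 1 ≤ m) (u d : V) (c : ℝ)
    (hd : ‖d‖ ≤ c * ‖(A ^ (p + 1)) u‖) (s : ℝ) (hs0 : 0 ≤ s) (hs1 : s ≤ 1) :
    ‖NormedSpace.exp (s • (m • A)) (u + d)
        - ∑ k ∈ Finset.range (p + 1), s ^ k • ((m ^ k / k.factorial) • (A ^ k) u)‖
      ≤ (Real.exp m * m ^ (p + 1) + Real.exp m * c) * ‖(A ^ (p + 1)) u‖ := by
  have : CompleteSpace V := FiniteDimensional.complete ℝ V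
  have h1 : ‖(1 : V →L[ℝ] V)‖ ≤ 1 := ContinuousLinearMap.norm_id_le
  set X := s • (m • A) with hX
  have hXn : ‖X‖ ≤ m := by
    rw [hX, norm_smul, norm_smul, Real.norm_of_nonneg hs0, Real.norm_of_nonneg (by linarith)]
    have : m * ‖A‖ ≤ m := by nlinarith [norm_nonneg A]
    have h0 : 0 ≤ m * ‖A‖ := by positivity
    nlinarith
  obtain ⟨Φ, hΦ, hΦn⟩ := rk_exp_rem h1 X (p + 1)
  obtain ⟨Ψ, hΨ, hΨn⟩ := rk_exp_rem h1 X 0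
  replace hΦn := hΦn.trans (Real.exp_le_exp.2 hXn)
  replace hΨn := hΨn.trans (Real.exp_le_exp.2 hXn)
  simp only [Finset.range_zero, Finset.sum_empty, pow_zero, mul_one, zero_add] at hΨ
  have hXk : ∀ k, X ^ k = (s ^ k * m ^ k) • A ^ k := fun k => by
    rw [hX, smul_pow, smul_pow, smul_smul]
  have e1 : NormedSpace.exp X u
      = ∑ k ∈ Finset.range (p + 1), s ^ k • ((m ^ k / k.factorial) • (A ^ k) u)
        + (s ^ (p + 1) * m ^ (p + 1)) • Φ ((A ^ (p + 1)) u) := by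
    rw [hΦ]
    simp only [hXk, ContinuousLinearMap.add_apply, ContinuousLinearMap.sum_apply,
      ContinuousLinearMap.smul_apply, mul_smul_comm, ContinuousLinearMap.mul_apply', smul_smul]
    congr 1
    apply Finset.sum_congr rfl
    intro k _
    congr 1
    ring
  rw [map_add, e1]
  have e2 : ∀ a b c : V, a + b + c - a = b + c := fun a b c => by abel
  rw [e2]
  refine (norm_add_le _ _).trans ?_
  rw [add_mul]
  apply add_le_add
  · rw [norm_smul, Real.norm_of_nonneg (by positivity)]
    have a1 : s ^ (p + 1) * m ^ (p + 1) ≤ m ^ (p + 1) := by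
      have := pow_le_one₀ (n := p + 1) hs0 hs1
      have h0 : 0 ≤ m ^ (p + 1) := by positivity
      nlinarith
    have a2 : ‖Φ ((A ^ (p + 1)) u)‖ ≤ Real.exp m * ‖(A ^ (p + 1)) u‖ :=
      (Φ.le_opNorm _).trans (mul_le_mul_of_nonneg_right hΦn (norm_nonneg _))
    calc _ ≤ m ^ (p + 1) * (Real.exp m * ‖(A ^ (p + 1)) u‖) :=
          mul_le_mul a1 a2 (norm_nonneg _) (by positivity)
      _ = _ := by ring
  · rw [hΨ]
    calc _ ≤ ‖Ψ‖ * ‖d‖ := Ψ.le_opNorm _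
      _ ≤ Real.exp m * (c * ‖(A ^ (p + 1)) u‖) :=
          mul_le_mul hΨn hd (norm_nonneg _) (Real.exp_pos _).le
      _ = _ := by ring

set_option maxHeartbeats 2000000 in
lemma rk_core (p : ℕ) (hp : Even p) (hp1 : 1 ≤ p) (m : ℝ) (hm : 1 ≤ m) (α β K : ℝ) (hα : 0 ≤ α)
    (hαm : α < m * (rkH p * (m ^ p / p.factorial) ^ 2)) (hβ : 0 < β) (hK : 0 ≤ K) :
    ∃ μ₀ > (0:ℝ), μ₀ ≤ 1 ∧
      ∀ (V : Type) [NormedAddCommGroup V] [InnerProductSpace ℝ V] [FiniteDimensional ℝ V]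
      (A : V →L[ℝ] V), (∀ v, ⟪A v, v⟫ ≤ 0) → ‖A‖ ≤ μ₀ → ∀ G : V →L[ℝ] V, Commute A G → ‖G‖ ≤ K →
      ∀ u d : V,
      d = -(α • (A ^ (2 * p + 1)) u) + β • (A ^ (2 * p + 2)) u + G ((A ^ (2 * p + 3)) u) →
      ‖NormedSpace.exp (m • A) (u + d)‖ ≤ ‖u‖ := by
  obtain ⟨δ, hδ, hco⟩ := rk_coercive p
  set h := m * (rkH p * (m ^ p / p.factorial) ^ 2) with hh
  have hh0 : 0 < h := lt_of_le_of_lt hα hαm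
  have hf : (0:ℝ) < p.factorial := by exact_mod_cast Nat.factorial_pos p
  set η := (1 - α / h) * (m * (δ * ((1 / (p.factorial : ℝ) ^ 2) * (1 / (p + 1 : ℝ))))) with hη
  have hθ : 0 < 1 - α / h := by rw [sub_pos, div_lt_one hh0]; exact hαm
  have hη0 : 0 < η := by positivity
  set c2 := Real.exp m * m ^ (p + 1) + Real.exp m * (α + β + K) with hc2
  have hc20 : 0 ≤ c2 := by positivity
  set C := 2 * (α + β + K) + m * (2 * m ^ p * c2) with hC
  have hC0 : 0 ≤ C := by positivity
  set C' := 2 * K + (α + β + K) ^ 2 with hC'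
  have hC'0 : 0 ≤ C' := by positivity
  refine ⟨min 1 (2 * β / (C ^ 2 / (2 * η) + C' + 1)), by positivity, min_le_left _ _, ?_⟩
  intro V _ _ _ A hA hAμ G hG hGK u d hd
  have hA1 : ‖A‖ ≤ 1 := hAμ.trans (min_le_left _ _)
  have hA2 : ‖A‖ * (C ^ 2 / (2 * η) + C') ≤ 2 * β := by
    have := hAμ.trans (min_le_right _ _)
    rw [le_div_iff₀ (by positivity)] at this
    nlinarith [norm_nonneg A]
  obtain ⟨hdn, h1⟩ := rk_c1 hA p hp hp1 α β K hα hβ.le hK hA1 G hG hGK u d hd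
  obtain ⟨hfl, hcont⟩ := rk_flow (A := A) m (u + d)
  set z := (A ^ (p + 1)) u with hz
  set Sg := ∑ j ∈ Finset.range (p + 1), √(rkB A ((A ^ j) u) ((A ^ j) u)) with hSg
  have hSg0 : 0 ≤ Sg := Finset.sum_nonneg fun _ _ => Real.sqrt_nonneg _
  set b := rkB A ((A ^ p) u) ((A ^ p) u) with hb
  set E := √(2 * ‖A‖) * ‖z‖ with hE
  have hE0 : 0 ≤ E := by positivity
  have hdz : ‖d‖ ≤ (α + β + K) * ‖z‖ := hdn.trans (by
    apply mul_le_mul_of_nonneg_left _ (by positivity)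
    nlinarith [norm_nonneg z])
  set x : ℕ → V := fun k => (m ^ k / k.factorial) • (A ^ k) u with hx
  set q : ℝ → V := fun s => ∑ k ∈ Finset.range (p + 1), s ^ k • x k with hq
  have hw : ∀ s : ℝ, 0 ≤ s → s ≤ 1 → ‖NormedSpace.exp (s • (m • A)) (u + d) - q s‖ ≤ c2 * ‖z‖ :=
    fun s hs0 hs1 => rk_c2 hA1 p m hm u d _ hdz s hs0 hs1
  have hqw : ∀ s : ℝ, 0 ≤ s → s ≤ 1 → ∀ w : V, ‖w‖ ≤ c2 * ‖z‖ →
      |rkB A (q s) w| ≤ m ^ p * c2 * (Sg * E) := by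
    intro s hs0 hs1 w hw
    have a1 : √(rkB A w w) ≤ c2 * E := by
      refine (rkB_bound w).trans ?_
      have := mul_le_mul_of_nonneg_left hw (Real.sqrt_nonneg (2 * ‖A‖))
      rw [hE]; linarith
    simp only [hq, hx, map_sum, LinearMap.sum_apply, map_smul, LinearMap.smul_apply, smul_eq_mul]
    refine (Finset.abs_sum_le_sum_abs _ _).trans ?_
    rw [hSg, Finset.sum_mul, Finset.mul_sum]
    apply Finset.sum_le_sum
    intro k hk
    have hk' : k ≤ p := by rw [Finset.mem_range] at hk; omega
    rw [abs_mul, abs_mul, abs_of_nonneg (pow_nonneg hs0 k), abs_of_nonneg (by positivity)]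
    have a2 := rkB_cs hA ((A ^ k) u) w
    have a3 : |rkB A ((A ^ k) u) w| ≤ √(rkB A ((A ^ k) u) ((A ^ k) u)) * (c2 * E) :=
      a2.trans (mul_le_mul_of_nonneg_left a1 (Real.sqrt_nonneg _))
    have a4 : m ^ k / k.factorial ≤ m ^ p := by
      have f1 : (1:ℝ) ≤ k.factorial := by exact_mod_cast Nat.factorial_pos k
      exact (div_le_self (by positivity) f1).trans (pow_le_pow_right₀ hm hk')
    have a5 := pow_le_one₀ (n := k) hs0 hs1
    have a6 : (m ^ k / k.factorial) * |rkB A ((A ^ k) u) w|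
        ≤ m ^ p * (√(rkB A ((A ^ k) u) ((A ^ k) u)) * (c2 * E)) :=
      mul_le_mul a4 a3 (abs_nonneg _) (by positivity)
    have a7 : 0 ≤ (m ^ k / k.factorial) * |rkB A ((A ^ k) u) w| := by positivity
    have a8 : s ^ k * ((m ^ k / k.factorial) * |rkB A ((A ^ k) u) w|)
      ≤ (m ^ k / k.factorial) * |rkB A ((A ^ k) u) w| := mul_le_of_le_one_left a7 a5
    linarith
  have hqc : Continuous fun s => rkB A (q s) (q s) := rk_cont (rkB A) (p + 1) (p + 1) x x
  set I := ∫ s in (0:ℝ)..1, rkB A (q s) (q s) with hI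
  have hbnd : I - 2 * (m ^ p * c2 * (Sg * E)) ≤ ∫ s in (0:ℝ)..1,
      rkB A (NormedSpace.exp (s • (m • A)) (u + d)) (NormedSpace.exp (s • (m • A)) (u + d)) := by
    have : ∫ s in (0:ℝ)..1, (rkB A (q s) (q s) - 2 * (m ^ p * c2 * (Sg * E)))
        ≤ ∫ s in (0:ℝ)..1, rkB A (NormedSpace.exp (s • (m • A)) (u + d))
          (NormedSpace.exp (s • (m • A)) (u + d)) := by
      apply intervalIntegral.integral_mono_on (by norm_num)
      · exact (hqc.sub continuous_const).intervalIntegrable _ _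
      · exact hcont.intervalIntegrable _ _
      · intro s hs
        set w := NormedSpace.exp (s • (m • A)) (u + d) - q s with hwd
        have b1 := (abs_le.1 (hqw s hs.1 hs.2 w (hw s hs.1 hs.2))).1
        have b2 : NormedSpace.exp (s • (m • A)) (u + d) = q s + w := by rw [hwd]; abel
        have b3 := rkB_pos hA w
        rw [b2]
        simp only [map_add, LinearMap.add_apply, rkB_symm A w (q s)]
        linarith
    rw [intervalIntegral.integral_sub (hqc.intervalIntegrable _ _)
      (continuous_const.intervalIntegrable _ _), intervalIntegral.integral_const, ← hI] at this
    simp only [sub_zero, one_smul] at this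
    exact this
  have hxx : ∀ k, rkB A (x k) (x k)
      = (m ^ k / k.factorial) ^ 2 * rkB A ((A ^ k) u) ((A ^ k) u) := fun k => by
    simp only [hx, map_smul, LinearMap.smul_apply, smul_eq_mul]; ring
  have htop : h * b ≤ m * I := by
    have := rk_top (rkB A) (rkB_symm A) (rkB_pos hA) p x
    rw [hxx, ← hI] at this
    have := mul_le_mul_of_nonneg_left this (show 0 ≤ m by linarith)
    rw [hh]; linarith
  have hlow : (m * (δ * ((1 / (p.factorial : ℝ) ^ 2) * (1 / (p + 1 : ℝ))))) * Sg ^ 2 ≤ m * I := by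
    have g := hco V (rkB A) (rkB_symm A) (rkB_pos hA) x
    rw [← hI] at g
    have g1 : Sg ^ 2 ≤ (p + 1) * ∑ k ∈ Finset.range (p + 1), rkB A ((A ^ k) u) ((A ^ k) u) := by
      have := sq_sum_le_card_mul_sum_sq (s := Finset.range (p + 1))
        (f := fun j => √(rkB A ((A ^ j) u) ((A ^ j) u)))
      simp only [Real.sq_sqrt (rkB_pos hA _), Finset.card_range, Nat.cast_add, Nat.cast_one] at this
      exact this
    have g2 : (1 / (p.factorial : ℝ) ^ 2) * ∑ k ∈ Finset.range (p + 1),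
        rkB A ((A ^ k) u) ((A ^ k) u) ≤ ∑ k ∈ Finset.range (p + 1), rkB A (x k) (x k) := by
      rw [Finset.mul_sum]
      apply Finset.sum_le_sum
      intro k hk
      have hk' : k ≤ p := by rw [Finset.mem_range] at hk; omega
      rw [hxx]
      apply mul_le_mul_of_nonneg_right _ (rkB_pos hA _)
      rw [← one_div_pow]
      apply pow_le_pow_left₀ (by positivity)
      have f1 : (k.factorial : ℝ) ≤ p.factorial := by exact_mod_cast Nat.factorial_le hk'
      exact div_le_div₀ (by positivity) (one_le_pow₀ hm) (by positivity) f1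
    have g3 : (1 / (p + 1 : ℝ)) * Sg ^ 2
        ≤ ∑ k ∈ Finset.range (p + 1), rkB A ((A ^ k) u) ((A ^ k) u) := by
      rw [one_div, inv_mul_le_iff₀ (by positivity)]; exact g1
    have g4 := mul_le_mul_of_nonneg_left g3 (show 0 ≤ 1 / (p.factorial : ℝ) ^ 2 by positivity)
    have g5 := mul_le_mul_of_nonneg_left (g4.trans g2) hδ.le
    have g6 := mul_le_mul_of_nonneg_left (g5.trans g) (show 0 ≤ m by linarith)
    linarith
  have hmI : α * b + η * Sg ^ 2 ≤ m * I := by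
    have k1 := mul_le_mul_of_nonneg_left htop (show 0 ≤ α / h by positivity)
    have k2 := mul_le_mul_of_nonneg_left hlow hθ.le
    have k3 : α / h * (h * b) = α * b := by field_simp
    rw [k3] at k1
    have k4 : η * Sg ^ 2 = (1 - α / h) * ((m * (δ * ((1 / (p.factorial : ℝ) ^ 2)
      * (1 / (p + 1 : ℝ))))) * Sg ^ 2) := by rw [hη]; ring
    rw [k4]
    linarith
  have hbnd2 := mul_le_mul_of_nonneg_left hbnd (show 0 ≤ m by linarith)
  have hE2 : E ^ 2 = 2 * ‖A‖ * ‖z‖ ^ 2 := by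
    rw [hE, mul_pow, Real.sq_sqrt (by positivity)]
  have young : C * (Sg * E) ≤ η * Sg ^ 2 + C ^ 2 / (4 * η) * E ^ 2 := by
    have : 0 ≤ η * (Sg - C / (2 * η) * E) ^ 2 := by positivity
    have e : η * (Sg - C / (2 * η) * E) ^ 2
      = η * Sg ^ 2 - C * (Sg * E) + C ^ 2 / (4 * η) * E ^ 2 := by field_simp; ring
    linarith
  have e5 : C ^ 2 / (4 * η) * E ^ 2 = ‖A‖ * (C ^ 2 / (2 * η)) * ‖z‖ ^ 2 := by
    rw [hE2]; field_simp; ring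
  have hfin := mul_le_mul_of_nonneg_right hA2 (sq_nonneg ‖z‖)
  have e6 : C * (Sg * E) = 2 * (α + β + K) * Sg * E + m * (2 * (m ^ p * c2 * (Sg * E))) := by
    rw [hC]; ring
  have : ‖NormedSpace.exp (m • A) (u + d)‖ ^ 2 ≤ ‖u‖ ^ 2 := by
    rw [hfl]
    linarith
  exact le_of_sq_le_sq this (norm_nonneg _)

lemma rk_alpha (p : ℕ) (hp1 : 1 ≤ p) (m : ℕ) (hm : 2 ≤ m) :
    (m : ℝ) / (2 * p + 1).factorial < m * (rkH p * ((m : ℝ) ^ p / p.factorial) ^ 2) := by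
  have h1 : (2 * p).factorial < p.factorial * p.factorial * m ^ (2 * p) := by
    have c := Nat.choose_mul_factorial_mul_factorial (show p ≤ 2 * p by omega)
    rw [show 2 * p - p = p by omega] at c
    have c2 := Nat.choose_lt_two_pow (2 * p) p (by omega)
    have c3 : 2 ^ (2 * p) ≤ m ^ (2 * p) := Nat.pow_le_pow_left hm _
    have := Nat.factorial_pos p
    rw [← c, mul_assoc, mul_comm]
    exact Nat.mul_lt_mul_of_pos_left (c2.trans_le c3) (by positivity)
  have h2 : ((2 * p).factorial : ℝ) < p.factorial * p.factorial * (m : ℝ) ^ (2 * p) := by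
    exact_mod_cast h1
  have f0 := Nat.factorial_pos p
  have f1 := Nat.factorial_pos (2 * p)
  have f2 := Nat.factorial_pos (2 * p + 1)
  have hm0 : (0:ℝ) < m := by exact_mod_cast (by omega : 0 < m)
  have e : m * (rkH p * ((m : ℝ) ^ p / p.factorial) ^ 2)
      = (m : ℝ) / (2 * p + 1).factorial
        * ((p.factorial * p.factorial * (m : ℝ) ^ (2 * p)) / (2 * p).factorial) := by
    rw [rkH, mul_comm 2 p, pow_mul]
    field_simp
  rw [e]
  apply lt_mul_of_one_lt_right (by positivity)
  rw [one_lt_div (by positivity)]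
  exact h2

lemma rk_step (r : ℕ) (hr : 4 ≤ r) (hmod : r % 4 = 0) (m : ℕ) (hm : m = 2 ∨ m = 3) :
    ∃ μ₀ > (0 : ℝ),
      ∀ (V : Type) [NormedAddCommGroup V] [InnerProductSpace ℝ V] [FiniteDimensional ℝ V]
      (A : V →L[ℝ] V), (∀ v, ⟪A v, v⟫ ≤ 0) → ‖A‖ ≤ μ₀ → ∀ w : V,
      ‖((∑ i ∈ Finset.range (r + 1), (1 / (i.factorial : ℝ)) • A ^ i) ^ m) w‖ ≤ ‖w‖ := by
  obtain ⟨p, rfl⟩ : ∃ p, r = 2 * p := ⟨r / 2, by omega⟩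
  have hp : Even p := by rw [Nat.even_iff]; omega
  have hm2 : 2 ≤ m := by omega
  have hm1 : (1:ℝ) ≤ m := by exact_mod_cast (by omega : 1 ≤ m)
  have hβ : (0:ℝ) < (m : ℝ) * (1 / (2 * p + 1).factorial - 1 / (2 * p + 2).factorial) := by
    apply mul_pos (by linarith)
    rw [sub_pos]
    apply one_div_lt_one_div_of_lt
    · exact_mod_cast Nat.factorial_pos _
    · exact_mod_cast (Nat.factorial_lt (by omega)).2 (by omega)
  obtain ⟨μ₀, h0, h1, h⟩ := rk_core p hp (by omega) m hm1 ((m : ℝ) / (2 * p + 1).factorial) _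
    25000 (by positivity) (rk_alpha p (by omega) m hm2) hβ (by norm_num)
  refine ⟨μ₀, h0, fun V _ _ _ A hA hAμ w => ?_⟩
  obtain ⟨G, hG, hGn, hR⟩ := rk_alg_op V A (hAμ.trans h1) (2 * p) (by omega) m hm
  have := h V A hA hAμ G hG hGn w _ rfl
  rw [hR]
  refine le_trans (le_of_eq ?_) this
  refine congrArg (fun x : V => ‖(NormedSpace.exp ((m:ℝ) • A) : V →L[ℝ] V) x‖) ?_
  change w - ((m : ℝ) / (2 * p + 1).factorial) • (A ^ (2 * p + 1)) w
    + ((m : ℝ) * (1 / (2 * p + 1).factorial - 1 / (2 * p + 2).factorial)) • (A ^ (2 * p + 2)) w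
    + G ((A ^ (2 * p + 3)) w) = _
  abel

/-- Strong(2) stability of the r-stage r-th order RK method for `r ≡ 0 (mod 4)`
(Theorem 3.8, case 4): for a semi-negative `L` and `τ‖L‖ ≤ μ₀`, the operator
`R = ∑_{i=0}^r (1/i!)(τL)^i` satisfies `‖R^m w‖ ≤ ‖w‖` for all `m ≥ 2`. -/
theorem rk_strong_two_stability_mod_zero (r : ℕ) (hr : 4 ≤ r) (hmod : r % 4 = 0) :
    ∃ μ₀ > (0 : ℝ),
      ∀ (V : Type) [NormedAddCommGroup V] [InnerProductSpace ℝ V] [FiniteDimensional ℝ V],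
      ∀ L Lstar : V →L[ℝ] V,
        (∀ w v : V, ⟪L w, v⟫ = ⟪w, Lstar v⟫) →
        (∀ v : V, ⟪(L + Lstar) v, v⟫ ≤ 0) →
        ∀ τ : ℝ, 0 < τ → τ * ‖L‖ ≤ μ₀ →
        ∀ m : ℕ, 2 ≤ m →
        ∀ w : V,
          ‖((∑ i ∈ Finset.range (r + 1), (1 / (i.factorial : ℝ)) • (τ • L) ^ i) ^ m) w‖
            ≤ ‖w‖ := by

  obtain ⟨μ2, h2, H2⟩ := rk_step r hr hmod 2 (Or.inl rfl)
  obtain ⟨μ3, h3, H3⟩ := rk_step r hr hmod 3 (Or.inr rfl)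
  refine ⟨min μ2 μ3, lt_min h2 h3, ?_⟩
  intro V _ _ _ L Lstar hadj hneg τ hτ hτL
  have hA : ∀ v : V, ⟪(τ • L) v, v⟫ ≤ 0 := fun v => by
    have a1 := hneg v
    rw [ContinuousLinearMap.add_apply, inner_add_left, real_inner_comm v (Lstar v),
      ← hadj v v] at a1
    rw [ContinuousLinearMap.smul_apply, real_inner_smul_left]
    exact mul_nonpos_of_nonneg_of_nonpos hτ.le (by linarith)
  have hn : ‖τ • L‖ ≤ min μ2 μ3 := by
    rwa [norm_smul, Real.norm_of_nonneg hτ.le]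
  have K2 := H2 V (τ • L) hA (hn.trans (min_le_left _ _))
  have K3 := H3 V (τ • L) hA (hn.trans (min_le_right _ _))
  set R := ∑ i ∈ Finset.range (r + 1), (1 / (i.factorial : ℝ)) • (τ • L) ^ i with hR
  intro m
  induction m using Nat.strong_induction_on with
  | _ m ih =>
    intro hm w
    by_cases hm2 : m = 2
    · subst hm2; exact K2 w
    by_cases hm3 : m = 3
    · subst hm3; exact K3 w
    obtain ⟨n, rfl⟩ : ∃ n, m = n + 2 := ⟨m - 2, by omega⟩
    rw [pow_add]
    exact (ih n (by omega) (by omega) ((R ^ 2) w)).trans (K2 w)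
end
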